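/- Let d ≥ 3 be a fixed integer and set 𝔡 = min{1/4, (d−2)/(2d)}. There exists N such that for all n ≥ N, the number of permutations P of [n]×[d] whose adjacency matrix A(P) has determinant 0 (as an integer matrix, i.e., is singular over ℝ) is at most n^{−𝔡}·(nd)!. -/

import Mathlib

open Finset

/-- Adjacency matrix of the directed configuration model. -/
def adjMat (n d : ℕ) (P : Equiv.Perm (Fin n × Fin d)) : Matrix (Fin n) (Fin n) ℤ :=
  fun k l => ((Finset.univ.filter (fun i : Fin d => (P (k, i)).1 = l)).card : ℤ)

/-!
A singular integer matrix is singular modulo every prime `p` and then annihilates at least `p - 1`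
nonzero vectors. Hence `p - 1` times the number of singular `A(P)` is at most the sum, over nonzero
`v ∈ (ZMod p)ⁿ`, of the number of `P` such that `A(P) v = 0`. This sum is `O((nd)!)` whenever
`(p log n) ^ 3` is at most a small multiple of `n`, so `p` can be taken of order `n ^ β` for any
`β < 1/3`.

The condition `A(P) v = 0` says that the rows of an `n × d` array of letters, in which each letter
appears `d` times as often as in `v`, all sum to zero. The generating function of such arrays bounds
the total contribution of the vectors with empirical distribution `ν`, up to a factor `n ^ O(p)`, by
`(nd)!` times the `n`-th power of a zero-sum partition function of `ν`. Fourier analysis on `ZMod p`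
shows that the latter is at most `1 - γ`, with `γ` of order `p log n / n`, which beats the
polynomial factor, unless `v` is sparse, almost constant, or almost uniform.

* Each of the few nonzero entries of a sparse `v` must share its row with another one, which is
  rare enough for a union bound.
* An almost constant vector with value `b ≠ 0` has a row with sum `d b ≠ 0`, as `d < p`.
* If `v` is almost uniform then a row sums to zero with probability close to `1 / p`. No polynomial
  factor may be lost here, so coefficients are extracted by averaging over phases, and the resulting
  probability that two random words have the same type is compared with the multinomial probability
  of the type of `v`. Since also `∑ i, v i = 0`, only `p ^ (n - 1)` such vectors contribute.
-/

namespace ConfigModel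

open scoped Nat ComplexConjugate

/-! ### The first moment -/

/-- The number of permutations of `[n] × [d]` whose adjacency matrix annihilates `v`. The entries of
`A(P) v` are written out as the row sums `∑ i, v (P (k, i)).1`, so that `v` may take values in any
additive monoid. -/
def annihilatorCount {G : Type*} [AddCommMonoid G] [DecidableEq G] (d : ℕ) {n : ℕ}
    (v : Fin n → G) : ℕ :=
  #{P : Equiv.Perm (Fin n × Fin d) | ∀ k, ∑ i, v (P (k, i)).1 = 0}

lemma adjMat_map_mulVec {R : Type*} [NonAssocRing R] {n d : ℕ} (P : Equiv.Perm (Fin n × Fin d))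
    (v : Fin n → R) (k : Fin n) :
    ((adjMat n d P).map (Int.cast : ℤ → R)).mulVec v k = ∑ i, v (P (k, i)).1 := by
  simp only [Matrix.mulVec, dotProduct, Matrix.map_apply, adjMat, Int.cast_natCast]
  rw [← sum_fiberwise' univ (fun i : Fin d => (P (k, i)).1) v]
  simp

lemma card_units_le_card_annihilated {F : Type*} [Field F] [Fintype F] [DecidableEq F] {n d : ℕ}
    {P : Equiv.Perm (Fin n × Fin d)} (hP : (adjMat n d P).det = 0) :
    Fintype.card F - 1 ≤ #{v : Fin n → F | v ≠ 0 ∧ ∀ k, ∑ i, v (P (k, i)).1 = 0} := by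
  have hdet : ((adjMat n d P).map (Int.castRingHom F)).det = 0 := by
    have h := RingHom.map_det (Int.castRingHom F) (adjMat n d P)
    rw [hP, map_zero] at h
    exact h.symm
  obtain ⟨v, hv0, hv⟩ := Matrix.exists_mulVec_eq_zero_iff.2 hdet
  have hrow : ∀ k, ∑ i, v (P (k, i)).1 = 0 := fun k => by
    rw [← adjMat_map_mulVec]
    exact congrFun hv k
  rw [← Fintype.card_units, ← card_univ]
  refine card_le_card_of_injOn (fun c : Fˣ => (c : F) • v) (fun c _ => ?_) fun c _ c' _ h => ?_
  · simp [hv0, hrow, ← mul_sum]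
  · exact Units.ext (smul_left_injective F hv0 h)

-- Each singular matrix annihilates a whole punctured line over `F`.
lemma mul_card_det_eq_zero_le (F : Type*) [Field F] [Fintype F] [DecidableEq F] (n d : ℕ) :
    (Fintype.card F - 1) * #{P : Equiv.Perm (Fin n × Fin d) | (adjMat n d P).det = 0} ≤
      ∑ v : Fin n → F with v ≠ 0, annihilatorCount d v := by
  have hswap : ∑ v : Fin n → F with v ≠ 0, annihilatorCount d v =
      ∑ P : Equiv.Perm (Fin n × Fin d),
        #{v : Fin n → F | v ≠ 0 ∧ ∀ k, ∑ i, v (P (k, i)).1 = 0} := by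
    simp only [annihilatorCount, ← filter_filter]
    exact sum_card_bipartiteAbove_eq_sum_card_bipartiteBelow
      (fun (v : Fin n → F) (P : Equiv.Perm (Fin n × Fin d)) => ∀ k, ∑ i, v (P (k, i)).1 = 0)
  rw [hswap, mul_comm, ← smul_eq_mul]
  exact (card_nsmul_le_sum _ _ _ fun P hP => card_units_le_card_annihilated
    (mem_filter.1 hP).2).trans (sum_le_sum_of_subset (filter_subset _ _))

/-! ### Words with prescribed rows and type -/

lemma sum_prod_rows {κ R : Type*} [Fintype κ] [CommSemiring R] (n : ℕ) {d : ℕ}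
    (r : (Fin d → κ) → Prop) [DecidablePred r] (z : κ → R) :
    ∑ w : Fin n × Fin d → κ with ∀ k, r fun i => w (k, i), ∏ x, z (w x) =
      (∑ u with r u, ∏ i, z (u i)) ^ n := by
  have h := prod_univ_sum (fun _ : Fin n => univ.filter r) (fun _ u => ∏ i, z (u i))
  rw [prod_const, card_univ, Fintype.card_fin] at h
  rw [h]
  refine sum_equiv (Equiv.curry (Fin n) (Fin d) κ) (fun w => ?_) fun w _ => ?_
  · simp only [mem_filter, mem_univ, true_and, Fintype.mem_piFinset, Equiv.curry_apply]
    rfl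
  · exact Fintype.prod_prod_type _

section Words

variable {X κ : Type*} [Fintype X] [DecidableEq κ]

/-- The type of the word `w` in the sense of information theory: the number of occurrences of each
letter. -/
def fiberCard (w : X → κ) (a : κ) : ℕ := #{x | w x = a}

lemma fiberCard_le_card (w : X → κ) (a : κ) : fiberCard w a ≤ Fintype.card X :=
  card_le_univ _

lemma sum_fiberCard [Fintype κ] (w : X → κ) : ∑ a, fiberCard w a = Fintype.card X :=
  (card_eq_sum_card_fiberwise fun _ _ => mem_coe.2 (mem_univ _)).symm

lemma fiberCard_comp_perm (w : X → κ) (σ : Equiv.Perm X) :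
    fiberCard (w ∘ σ) = fiberCard w :=
  funext fun _ => card_equiv σ (by simp)

lemma prod_comp_eq_prod_pow_fiberCard [Fintype κ] {R : Type*} [CommMonoid R] (w : X → κ)
    (z : κ → R) : ∏ x, z (w x) = ∏ a, z a ^ fiberCard w a := by
  simp [fiberCard, ← prod_fiberwise' univ w z]

lemma fiberCard_fst {n : ℕ} (d : ℕ) (v : Fin n → κ) (a : κ) :
    fiberCard (fun x : Fin n × Fin d => v x.1) a = d * fiberCard v a := by
  have h : ({x : Fin n × Fin d | v x.1 = a} : Finset _) =
      ({i | v i = a} : Finset (Fin n)) ×ˢ univ := by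
    ext x
    simp
  rw [fiberCard, h, card_product, card_univ, Fintype.card_fin, mul_comm, fiberCard]

-- The fibres of `σ ↦ c ∘ σ` are cosets of the stabiliser of `c`.
lemma card_perm_comp_le [DecidableEq X] [Fintype κ] (c : X → κ) (r : (X → κ) → Prop)
    [DecidablePred r] :
    #{σ : Equiv.Perm X | r (c ∘ σ)} ≤
      (∏ a, (fiberCard c a)!) * #{w : X → κ | r w ∧ fiberCard w = fiberCard c} := by
  refine (card_le_mul_card_image (f := fun σ : Equiv.Perm X => c ∘ σ) _
    (∏ a, (fiberCard c a)!) fun w hw => ?_).trans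
    (Nat.mul_le_mul_left _ (card_le_card fun w hw => ?_))
  · obtain ⟨σ, -, rfl⟩ := mem_image.1 hw
    have hstab := DomMulAct.stabilizer_card c
    simp only [Fintype.card_subtype] at hstab
    simp only [fiberCard, ← hstab]
    refine card_le_card_of_injOn (fun τ => τ * σ⁻¹) (fun τ hτ => ?_) fun τ _ τ' _ h => by
      simpa using h
    simp only [coe_filter, mem_filter, Set.mem_ofPred_eq, mem_univ, true_and] at hτ ⊢
    funext x
    simpa using congrFun hτ.2 (σ⁻¹ x)
  · obtain ⟨σ, hσ, rfl⟩ := mem_image.1 hw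
    exact mem_filter.2 ⟨mem_univ _, (mem_filter.1 hσ).2, fiberCard_comp_perm c σ⟩

/-- The number of `n × d` arrays of letters all of whose rows satisfy `r` and in which each letter
`a` occurs `m a` times. -/
def rowWordCount [Fintype κ] (n : ℕ) {d : ℕ} (r : (Fin d → κ) → Prop) [DecidablePred r]
    (m : κ → ℕ) : ℕ :=
  #{w : Fin n × Fin d → κ | (∀ k, r fun i => w (k, i)) ∧ fiberCard w = m}

lemma rowWordCount_mul_prod_pow_le [Fintype κ] (n : ℕ) {d : ℕ} (r : (Fin d → κ) → Prop)
    [DecidablePred r] (m : κ → ℕ) {x : κ → ℝ} (hx : ∀ a, 0 ≤ x a) :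
    (rowWordCount n r m : ℝ) * ∏ a, x a ^ m a ≤ (∑ u with r u, ∏ i, x (u i)) ^ n := by
  rw [← sum_prod_rows, rowWordCount, ← filter_filter, ← nsmul_eq_mul, ← sum_const]
  refine le_trans (sum_congr rfl fun w hw => ?_).le
    (sum_le_sum_of_subset_of_nonneg (filter_subset (fun w => fiberCard w = m) _)
      fun w _ _ => prod_nonneg fun i _ => hx _)
  rw [prod_comp_eq_prod_pow_fiberCard, (mem_filter.1 hw).2]

lemma annihilatorCount_le_prod_factorial_mul_rowWordCount {G : Type*} [AddCommMonoid G]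
    [DecidableEq G] [Fintype G] (d : ℕ) {n : ℕ} (v : Fin n → G) :
    annihilatorCount d v ≤ (∏ a, (d * fiberCard v a)!) *
      rowWordCount n (fun u : Fin d → G => ∑ i, u i = 0) fun a => d * fiberCard v a := by
  have h := card_perm_comp_le (fun x : Fin n × Fin d => v x.1)
    (fun w => ∀ k, ∑ i, w (k, i) = 0)
  simp only [funext (fiberCard_fst d v)] at h
  exact h

end Words

/-! ### Sparse vectors -/

lemma factorial_mul_factorial_sub_mul_pow_le {N k : ℕ} (hk : k ≤ N) :
    k ! * (N - k)! * N ^ k ≤ N ! * k ^ k := by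
  have h : k ! * N ^ k ≤ N.descFactorial k * k ^ k := by
    rw [← Nat.descFactorial_self, Nat.descFactorial_eq_prod_range,
      Nat.descFactorial_eq_prod_range, ← card_range k, ← prod_const, ← prod_const, card_range,
      ← prod_mul_distrib, ← prod_mul_distrib]
    refine prod_le_prod' fun i hi => ?_
    obtain ⟨a, rfl⟩ := Nat.exists_eq_add_of_lt (mem_range.1 hi)
    obtain ⟨b, rfl⟩ := Nat.exists_eq_add_of_le hk
    rw [show i + a + 1 - i = a + 1 by omega, show i + a + 1 + b - i = a + 1 + b by omega]
    nlinarith [Nat.zero_le (i * b)]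
  calc k ! * (N - k)! * N ^ k = (N - k)! * (k ! * N ^ k) := by ring
    _ ≤ (N - k)! * (N.descFactorial k * k ^ k) := Nat.mul_le_mul_left _ h
    _ = N ! * k ^ k := by rw [← Nat.factorial_mul_descFactorial hk]; ring

lemma choose_le_exp_mul_div_pow (n s : ℕ) :
    (n.choose s : ℝ) ≤ (Real.exp 1 * n / s) ^ s := by
  rcases s.eq_zero_or_pos with rfl | hs
  · simp
  have hfact : (s : ℝ) ^ s ≤ Real.exp 1 ^ s * s ! := by
    rw [← div_le_iff₀ (by positivity), ← Real.exp_nat_mul, mul_one]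
    exact Real.pow_div_factorial_le_exp s (by positivity) s
  refine (Nat.choose_le_pow_div s n).trans ?_
  rw [div_pow, mul_pow, div_le_div_iff₀ (by positivity) (by positivity)]
  calc (n : ℝ) ^ s * s ^ s ≤ n ^ s * (Real.exp 1 ^ s * s !) := by gcongr
    _ = Real.exp 1 ^ s * n ^ s * s ! := by ring

lemma hammingNorm_ne_one_of_sum_eq_zero {ι G : Type*} [Fintype ι] [AddCommMonoid G]
    [DecidableEq G] {u : ι → G} (hu : ∑ i, u i = 0) : hammingNorm u ≠ 1 := by
  intro h
  obtain ⟨i, hi⟩ := card_eq_one.1 h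
  have hmem : ∀ j, u j ≠ 0 ↔ j = i := by simpa [Finset.ext_iff] using hi
  refine (hmem i).2 rfl ?_
  rwa [sum_eq_single i (fun j _ hj => not_not.1 (mt (hmem j).1 hj)) (by simp)] at hu

lemma sum_prod_ite_le {d : ℕ} {t : ℝ} (ht0 : 0 ≤ t) (ht1 : t ≤ 1) :
    ∑ u : Fin d → Bool with fiberCard u true ≠ 1, ∏ i, (if u i then t else 1) ≤
      1 + 2 ^ d * t ^ 2 := by
  have hterm : ∀ u : Fin d → Bool, fiberCard u true ≠ 1 →
      ∏ i, (if u i then t else 1) ≤ (if u = fun _ => false then 1 else 0) + t ^ 2 := by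
    intro u hu
    rw [prod_comp_eq_prod_pow_fiberCard u fun b => if b then t else 1]
    simp only [Fintype.prod_bool, if_true, Bool.false_eq_true, if_false, one_pow, mul_one]
    split_ifs with h
    · exact (pow_le_one₀ ht0 ht1).trans (le_add_of_nonneg_right (sq_nonneg t))
    · have hne : fiberCard u true ≠ 0 := fun h0 => h <| funext fun i => by
        simpa using filter_eq_empty_iff.1 (card_eq_zero.1 h0) (mem_univ i)
      rw [zero_add]
      exact pow_le_pow_of_le_one ht0 ht1 (by omega)
  calc _ ≤ ∑ u : Fin d → Bool with fiberCard u true ≠ 1,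
          ((if u = fun _ => false then 1 else 0) + t ^ 2) :=
        sum_le_sum fun u hu => hterm u (mem_filter.1 hu).2
    _ ≤ ∑ u : Fin d → Bool, ((if u = fun _ => false then 1 else 0) + t ^ 2) :=
        sum_le_sum_of_subset_of_nonneg (filter_subset _ _) fun u _ _ => by positivity
    _ = 1 + 2 ^ d * t ^ 2 := by simp [sum_add_distrib]

lemma rowWordCount_ne_one_mul_pow_le (n : ℕ) {d : ℕ} (m : Bool → ℕ) {t : ℝ} (ht0 : 0 ≤ t)
    (ht1 : t ≤ 1) :
    (rowWordCount n (fun u : Fin d → Bool => fiberCard u true ≠ 1) m : ℝ) * t ^ m true ≤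
      Real.exp (n * (2 ^ d * t ^ 2)) := by
  have hx : ∀ b : Bool, 0 ≤ if b then t else 1 := fun b => by split_ifs <;> positivity
  have h := rowWordCount_mul_prod_pow_le n (fun u : Fin d → Bool => fiberCard u true ≠ 1) m hx
  simp only [Fintype.prod_bool, if_true, Bool.false_eq_true, if_false, one_pow, mul_one] at h
  rw [Real.exp_nat_mul]
  refine h.trans (pow_le_pow_left₀ (sum_nonneg fun u _ => prod_nonneg fun i _ => hx _)
    ((sum_prod_ite_le ht0 ht1).trans ?_) n)
  linarith [Real.add_one_le_exp (2 ^ d * t ^ 2)]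

lemma inv_mul_sqrt_pow_le {x : ℝ} (hx : 0 ≤ x) (hx1 : x ≤ 1) {d : ℕ} (hd : 3 ≤ d) :
    x⁻¹ * √x ^ d ≤ √x := by
  calc x⁻¹ * √x ^ d ≤ x⁻¹ * √x ^ 3 := by
        gcongr ?_ * ?_
        exact pow_le_pow_of_le_one (Real.sqrt_nonneg _) (Real.sqrt_le_one.2 hx1) hd
    _ = x⁻¹ * x * √x := by rw [pow_succ √x, Real.sq_sqrt hx, mul_assoc]
    _ ≤ √x := mul_le_of_le_one_left (Real.sqrt_nonneg _) (inv_mul_le_one)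

section Sparse

variable {G : Type*} [AddCommMonoid G] [DecidableEq G] {n : ℕ}

-- A row sum with exactly one nonzero term cannot vanish, so only the zero pattern of `v` matters.
lemma annihilatorCount_le_support (d : ℕ) (v : Fin n → G) :
    ∃ m : Bool → ℕ, m true = d * hammingNorm v ∧ annihilatorCount d v ≤
      (d * hammingNorm v)! * (n * d - d * hammingNorm v)! *
        rowWordCount n (fun u : Fin d → Bool => fiberCard u true ≠ 1) m := by
  set b : Fin n → Bool := fun i => decide (v i ≠ 0)
  set c : Fin n × Fin d → Bool := fun x => b x.1
  have htrue : fiberCard c true = d * hammingNorm v := by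
    rw [fiberCard_fst]
    simp [b, fiberCard, hammingNorm]
  have hfalse : fiberCard c false = n * d - d * hammingNorm v := by
    have := sum_fiberCard c
    simp only [Fintype.sum_bool, Fintype.card_prod, Fintype.card_fin] at this
    omega
  refine ⟨fiberCard c, htrue, le_trans (card_le_card fun σ hσ => ?_) <|
    (card_perm_comp_le c fun w => ∀ k, fiberCard (fun i => w (k, i)) true ≠ 1).trans_eq ?_⟩
  · refine mem_filter.2 ⟨mem_univ _, fun k => ?_⟩
    have h := hammingNorm_ne_one_of_sum_eq_zero ((mem_filter.1 hσ).2 k)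
    simpa [hammingNorm, fiberCard, c, b] using h
  · rw [Fintype.prod_bool, htrue, hfalse]
    rfl

lemma annihilatorCount_le_of_hammingNorm (d : ℕ) (v : Fin n → G) :
    (annihilatorCount d v : ℝ) ≤
      (n * d)! * (Real.exp (2 ^ d) * √(hammingNorm v / n) ^ d) ^ hammingNorm v := by
  obtain ⟨m, hm, hcount⟩ := annihilatorCount_le_support d v
  have hsn : hammingNorm v ≤ n := hammingNorm_le_card_fintype.trans_eq (Fintype.card_fin n)
  set s := hammingNorm v
  set W := rowWordCount n (fun u : Fin d → Bool => fiberCard u true ≠ 1) m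
  set t := √((s : ℝ) / n)
  have hsq : n * t ^ 2 = s := by
    rw [Real.sq_sqrt (by positivity), mul_div_cancel_of_imp']
    intro h
    have : n = 0 := by exact_mod_cast h
    exact_mod_cast (by omega : s = 0)
  have hW : (W : ℝ) * t ^ (d * s) ≤ Real.exp (2 ^ d) ^ s := by
    have ht1 : t ≤ 1 := Real.sqrt_le_one.2 (div_le_one_of_le₀ (by exact_mod_cast hsn) (by simp))
    rw [← hm, ← Real.exp_nat_mul]
    refine (rowWordCount_ne_one_mul_pow_le n m (Real.sqrt_nonneg _) ht1).trans_eq ?_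
    rw [mul_left_comm, hsq, mul_comm]
  have hfact : ((d * s)! * (n * d - d * s)! : ℝ) ≤ (n * d)! * (t ^ 2) ^ (d * s) := by
    rcases n.eq_zero_or_pos with rfl | hn
    · simp [show s = 0 by omega]
    have hle := factorial_mul_factorial_sub_mul_pow_le (N := n * d) (k := d * s)
      (by rw [mul_comm n]; exact Nat.mul_le_mul_left d hsn)
    rcases (n * d).eq_zero_or_pos with h0 | hnd
    · simp [show d = 0 by simpa [hn.ne'] using h0]
    have hpow : (0 : ℝ) < ((n * d : ℕ) : ℝ) ^ (d * s) := by positivity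
    refine le_of_mul_le_mul_right ?_ hpow
    rw [mul_assoc ((n * d)! : ℝ), ← mul_pow, Nat.cast_mul n, ← mul_assoc, mul_comm (t ^ 2), hsq,
      mul_comm (s : ℝ)]
    exact_mod_cast hle
  calc (annihilatorCount d v : ℝ) ≤ (d * s)! * (n * d - d * s)! * W := by exact_mod_cast hcount
    _ ≤ (n * d)! * (t ^ 2) ^ (d * s) * W := by gcongr
    _ = (n * d)! * t ^ (d * s) * (W * t ^ (d * s)) := by ring
    _ ≤ (n * d)! * t ^ (d * s) * Real.exp (2 ^ d) ^ s := by gcongr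
    _ = (n * d)! * (Real.exp (2 ^ d) * t ^ d) ^ s := by rw [mul_pow, ← pow_mul]; ring

lemma card_hammingNorm_eq_le {ι κ : Type*} [Fintype ι] [DecidableEq ι] [Zero κ] [DecidableEq κ]
    [Fintype κ] (s : ℕ) :
    #{v : ι → κ | hammingNorm v = s} ≤ Fintype.card κ ^ s * (Fintype.card ι).choose s := by
  rw [← card_univ (α := ι), ← card_powersetCard]
  refine card_le_mul_card_image_of_maps_to (f := fun v : ι → κ => ({i | v i ≠ 0} : Finset ι))
    (fun v hv => mem_powersetCard.2 ⟨subset_univ _, (mem_filter.1 hv).2⟩) _ fun S hS => ?_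
  have hcard : Fintype.card (S → κ) = Fintype.card κ ^ s := by
    simp [(mem_powersetCard.1 hS).2]
  rw [← hcard, ← card_univ]
  refine card_le_card_of_injOn (fun v i => v i) (by simp) fun v hv w hw h => ?_
  have hzero : ∀ u ∈ ({v ∈ ({v | hammingNorm v = s} : Finset (ι → κ)) |
      ({i | v i ≠ 0} : Finset ι) = S} : Finset _), ∀ i ∉ S, u i = 0 := fun u hu i hi => by
    simpa [← (mem_filter.1 hu).2] using hi
  funext i
  by_cases hi : i ∈ S
  · exact congrFun h ⟨i, hi⟩
  · rw [hzero v hv i hi, hzero w hw i hi]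

variable [Fintype G]

lemma sum_annihilatorCount_hammingNorm_eq_le {d : ℕ} (hd : 3 ≤ d) (n s : ℕ) :
    ∑ v : Fin n → G with hammingNorm v = s, (annihilatorCount d v : ℝ) ≤
      (n * d)! * (Real.exp (1 + 2 ^ d) * Fintype.card G * √(s / n)) ^ s := by
  set t := √((s : ℝ) / n)
  rcases lt_or_ge n s with hns | hsn
  · rw [sum_eq_zero]
    · positivity
    · intro v hv
      have := hammingNorm_le_card_fintype (x := v)
      rw [(mem_filter.1 hv).2, Fintype.card_fin] at this
      omega
  have hcard : (#{v : Fin n → G | hammingNorm v = s} : ℝ) ≤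
      (Fintype.card G * (Real.exp 1 * n / s)) ^ s := by
    have h := card_hammingNorm_eq_le (ι := Fin n) (κ := G) s
    rw [Fintype.card_fin] at h
    calc (_ : ℝ) ≤ Fintype.card G ^ s * n.choose s := by exact_mod_cast h
      _ ≤ Fintype.card G ^ s * (Real.exp 1 * n / s) ^ s := by
        gcongr
        exact choose_le_exp_mul_div_pow n s
      _ = _ := (mul_pow _ _ _).symm
  have hbase : (n : ℝ) / s * t ^ d ≤ t := by
    rw [← inv_div]
    exact inv_mul_sqrt_pow_le (by positivity)
      (div_le_one_of_le₀ (by exact_mod_cast hsn) (by positivity)) hd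
  calc _ ≤ ∑ v : Fin n → G with hammingNorm v = s,
          ((n * d)! * (Real.exp (2 ^ d) * t ^ d) ^ s : ℝ) := by
        refine sum_le_sum fun v hv => ?_
        have h := annihilatorCount_le_of_hammingNorm d v
        rwa [(mem_filter.1 hv).2] at h
    _ ≤ (Fintype.card G * (Real.exp 1 * n / s)) ^ s *
          ((n * d)! * (Real.exp (2 ^ d) * t ^ d) ^ s) := by
        rw [sum_const, nsmul_eq_mul]
        gcongr
    _ = (n * d)! * (Real.exp (1 + 2 ^ d) * Fintype.card G * (n / s * t ^ d)) ^ s := by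
        rw [Real.exp_add, mul_left_comm, ← mul_pow]
        congr 2
        ring
    _ ≤ _ := by gcongr

lemma sum_annihilatorCount_sparse_le {d : ℕ} (hd : 3 ≤ d) (n : ℕ) {δ : ℝ}
    (hδ : Real.exp (1 + 2 ^ d) * Fintype.card G * √δ ≤ 1 / 2) :
    ∑ v : Fin n → G with v ≠ 0 ∧ hammingNorm v ≤ δ * n, (annihilatorCount d v : ℝ) ≤
      (n * d)! := by
  have hlayer : ∀ s : ℕ, ∑ v : Fin n → G with (v ≠ 0 ∧ hammingNorm v ≤ δ * n) ∧ hammingNorm v = s,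
      (annihilatorCount d v : ℝ) ≤ (n * d)! * (1 / 2) ^ s := by
    intro s
    rcases le_or_gt (s : ℝ) (δ * n) with hs | hs
    · refine (sum_le_sum_of_subset_of_nonneg (fun v hv => ?_) fun _ _ _ => by positivity).trans
        ((sum_annihilatorCount_hammingNorm_eq_le hd n s).trans ?_)
      · exact mem_filter.2 ⟨mem_univ _, (mem_filter.1 hv).2.2⟩
      · gcongr
        refine (mul_le_mul_of_nonneg_left ?_ (by positivity)).trans hδ
        rcases n.eq_zero_or_pos with rfl | hn
        · simp
        · exact Real.sqrt_le_sqrt ((div_le_iff₀ (by positivity)).2 hs)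
    · rw [sum_eq_zero]
      · positivity
      · rintro v hv
        obtain ⟨-, ⟨-, h⟩, rfl⟩ := mem_filter.1 hv
        exact absurd h hs.not_ge
  have hmaps : ∀ v ∈ ({v | v ≠ 0 ∧ hammingNorm v ≤ δ * n} : Finset (Fin n → G)),
      hammingNorm v ∈ (range (n + 1)).erase 0 := fun v hv => mem_erase.2
    ⟨hammingNorm_ne_zero_iff.2 (mem_filter.1 hv).2.1, mem_range.2 (Nat.lt_succ_of_le
      (hammingNorm_le_card_fintype.trans_eq (Fintype.card_fin n)))⟩
  have hgeom : ∑ s ∈ (range (n + 1)).erase 0, (1 / 2 : ℝ) ^ s ≤ 1 := by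
    have h := sum_geometric_two_le (n + 1)
    rw [← add_sum_erase _ _ (mem_range.2 n.succ_pos), pow_zero] at h
    linarith
  calc _ = ∑ s ∈ (range (n + 1)).erase 0,
          ∑ v : Fin n → G with (v ≠ 0 ∧ hammingNorm v ≤ δ * n) ∧ hammingNorm v = s,
            (annihilatorCount d v : ℝ) := by
        rw [← sum_fiberwise_of_maps_to hmaps]
        simp only [filter_filter]
    _ ≤ ∑ s ∈ (range (n + 1)).erase 0, ((n * d)! * (1 / 2) ^ s : ℝ) :=
        sum_le_sum fun s _ => hlayer s
    _ ≤ (n * d)! := by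
        rw [← mul_sum]
        exact mul_le_of_le_one_right (by positivity) hgeom

end Sparse

/-! ### Fourier analysis on a finite abelian group -/

section Fourier

variable {G : Type*} [AddCommGroup G] [Fintype G]

/-- The unnormalized Fourier transform of `h` at the character `ψ`. -/
noncomputable def charTransform (h : G → ℂ) (ψ : AddChar G ℂ) : ℂ := ∑ a, h a * ψ a

lemma norm_charTransform_le (h : G → ℂ) (ψ : AddChar G ℂ) : ‖charTransform h ψ‖ ≤ ∑ a, ‖h a‖ :=
  (norm_sum_le _ _).trans_eq (by simp [AddChar.norm_apply])

lemma addChar_map_sum {A R ι : Type*} [AddCommMonoid A] [CommMonoid R] (ψ : AddChar A R)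
    (s : Finset ι) (f : ι → A) : ψ (∑ i ∈ s, f i) = ∏ i ∈ s, ψ (f i) :=
  map_prod ψ.toMonoidHom (fun i => Multiplicative.ofAdd (f i)) s

lemma card_mul_sum_sum_eq_zero [DecidableEq G] {ι : Type*} [Fintype ι] [DecidableEq ι]
    (h : ι → G → ℂ) :
    (Fintype.card G : ℂ) * ∑ u : ι → G with ∑ i, u i = 0, ∏ i, h i (u i)
      = ∑ ψ, ∏ i, charTransform (h i) ψ := by
  have expand (ψ : AddChar G ℂ) : ∏ i, charTransform (h i) ψ
      = ∑ u : ι → G, (∏ i, h i (u i)) * ψ (∑ i, u i) := by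
    simp only [charTransform, prod_univ_sum, Fintype.piFinset_univ, prod_mul_distrib,
      addChar_map_sum]
  simp only [expand, sum_comm (s := (univ : Finset (AddChar G ℂ))), sum_filter, ← mul_sum,
    AddChar.sum_apply_eq_ite]
  rw [mul_sum]
  refine sum_congr rfl fun u _ => ?_
  split_ifs <;> ring

lemma sum_norm_sq_charTransform_mul_apply (h : G → ℂ) (u : G) :
    ∑ ψ, (‖charTransform h ψ‖ ^ 2 : ℂ) * ψ u
      = Fintype.card G * ∑ a, h a * conj (h (a + u)) := by
  classical
  have expand (ψ : AddChar G ℂ) : (‖charTransform h ψ‖ ^ 2 : ℂ) * ψ u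
      = ∑ a, ∑ b, h a * conj (h b) * ψ (a + u - b) := by
    rw [← Complex.mul_conj']
    simp only [charTransform, map_sum, map_mul]
    rw [sum_mul_sum]
    simp only [sum_mul]
    refine sum_congr rfl fun a _ => sum_congr rfl fun b _ => ?_
    rw [sub_eq_add_neg, AddChar.map_add_eq_mul, AddChar.map_add_eq_mul, AddChar.map_neg_eq_conj]
    ring
  simp only [expand]
  rw [sum_comm, mul_sum]
  refine sum_congr rfl fun a _ => ?_
  rw [sum_comm]
  simp only [← mul_sum, AddChar.sum_apply_eq_ite, sub_eq_zero, mul_ite, mul_zero, sum_ite_eq,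
    mem_univ, if_true]
  ring

lemma sum_norm_sq_charTransform (h : G → ℂ) :
    ∑ ψ, ‖charTransform h ψ‖ ^ 2 = Fintype.card G * ∑ a, ‖h a‖ ^ 2 := by
  have h0 := sum_norm_sq_charTransform_mul_apply h 0
  simp only [AddChar.map_zero_eq_one, mul_one, add_zero, Complex.mul_conj'] at h0
  exact_mod_cast h0

lemma sum_norm_sq_mul_norm_sq_charTransform (f g : G → ℂ) :
    ∑ ψ, (‖charTransform f ψ‖ ^ 2 * ‖charTransform g ψ‖ ^ 2 : ℂ)
      = Fintype.card G * ∑ t, ∑ s, g t * conj (g s) * ∑ a, f a * conj (f (a + (t - s))) := by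
  have expand (ψ : AddChar G ℂ) : (‖charTransform f ψ‖ ^ 2 * ‖charTransform g ψ‖ ^ 2 : ℂ)
      = ∑ t, ∑ s, g t * conj (g s) * (‖charTransform f ψ‖ ^ 2 * ψ (t - s)) := by
    rw [← Complex.mul_conj' (charTransform g ψ)]
    simp only [charTransform.eq_def g, map_sum, map_mul]
    rw [sum_mul_sum]
    simp only [mul_sum]
    refine sum_congr rfl fun t _ => sum_congr rfl fun s _ => ?_
    rw [sub_eq_add_neg, AddChar.map_add_eq_mul, AddChar.map_neg_eq_conj]
    ring
  simp only [expand]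
  rw [sum_comm, mul_sum]
  refine sum_congr rfl fun t _ => ?_
  rw [sum_comm, mul_sum]
  refine sum_congr rfl fun s _ => ?_
  rw [← mul_sum, sum_norm_sq_charTransform_mul_apply, mul_left_comm]

end Fourier

/-! ### The spectral gap -/

section SpectralGap

variable {G : Type*} [AddCommGroup G] [Fintype G] {ν : G → ℝ}

/-- The total weight of the words of length `d` over `G` with zero sum, a letter `a` weighing
`ν a ^ ((d - 1) / d)`. Its `n`-th power governs the first moment over the vectors in `Gⁿ` with
empirical distribution `ν`. -/
noncomputable def zeroSumPartition [DecidableEq G] (d : ℕ) (ν : G → ℝ) : ℝ :=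
  ∑ u : Fin d → G with ∑ i, u i = 0, ∏ i, ν (u i) ^ (((d : ℝ) - 1) / d)

/-- AM-GM over the cyclic shifts of the exponents, under which zero-sum words are invariant. -/
lemma sum_zero_sum_prod_rpow_le [DecidableEq G] {d : ℕ} [NeZero d] (hν : ∀ a, 0 ≤ ν a)
    {e : Fin d → ℝ} (he : ∀ i, 0 ≤ e i) :
    ∑ u : Fin d → G with ∑ i, u i = 0, ∏ i, ν (u i) ^ ((∑ j, e j) / d)
      ≤ ∑ u : Fin d → G with ∑ i, u i = 0, ∏ i, ν (u i) ^ e i := by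
  have hd : (d : ℝ) ≠ 0 := NeZero.ne _
  have amgm (u : Fin d → G) : ∏ i, ν (u i) ^ ((∑ j, e j) / d)
      ≤ ∑ c : Fin d, (1 / (d : ℝ)) * ∏ i, ν (u i) ^ e (i - c) := by
    refine le_of_eq_of_le ?_ (Real.geom_mean_le_arith_mean_weighted univ (fun _ => 1 / (d : ℝ))
      (fun c => ∏ i, ν (u i) ^ e (i - c)) (fun _ _ => by positivity) (by simp [hd])
      fun c _ => prod_nonneg fun _ _ => Real.rpow_nonneg (hν _) _)
    simp only [← Real.finsetProd_rpow _ _ (fun _ _ => Real.rpow_nonneg (hν _) _)]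
    rw [prod_comm]
    refine prod_congr rfl fun i _ => ?_
    simp only [← Real.rpow_mul (hν _)]
    rw [← Real.rpow_sum_of_nonneg (hν _) fun c _ => mul_nonneg (he _) (by positivity), ← sum_mul,
      mul_one_div, ← Equiv.sum_comp (Equiv.subLeft i) e]
    rfl
  have shift (c : Fin d) : ∑ u : Fin d → G with ∑ i, u i = 0, ∏ i, ν (u i) ^ e (i - c)
      = ∑ u : Fin d → G with ∑ i, u i = 0, ∏ i, ν (u i) ^ e i := by
    refine sum_equiv ((Equiv.subRight c).arrowCongr (Equiv.refl G)) (fun u => ?_) fun u _ => ?_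
    · simpa using (Equiv.sum_comp (Equiv.addRight c) u).symm ▸ Iff.rfl
    · simpa using (Equiv.prod_comp (Equiv.addRight c) fun i => ν (u i) ^ e (i - c)).symm
  calc _ ≤ ∑ u : Fin d → G with ∑ i, u i = 0,
        ∑ c : Fin d, (1 / (d : ℝ)) * ∏ i, ν (u i) ^ e (i - c) := sum_le_sum fun u _ => amgm u
    _ = _ := by
      rw [sum_comm]
      simp only [← mul_sum, shift]
      simp [hd]

lemma norm_charTransform_le_one (hν : ν ∈ stdSimplex ℝ G) (ψ : AddChar G ℂ) :
    ‖charTransform (fun a => (ν a : ℂ)) ψ‖ ≤ 1 := by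
  refine (norm_charTransform_le _ _).trans_eq ?_
  simp [abs_of_nonneg (hν.1 _), hν.2]

lemma sum_norm_sq_charTransform_sqrt (hν : ν ∈ stdSimplex ℝ G) :
    ∑ ψ, ‖charTransform (fun a => (√(ν a) : ℂ)) ψ‖ ^ 2 = Fintype.card G := by
  simp [sum_norm_sq_charTransform, Real.sq_sqrt (hν.1 _), hν.2]

/-- The exponents `(d - 1) / d` are averaged from `1/2, 1/2, 1, …, 1`. -/
lemma card_mul_zeroSumPartition_le [DecidableEq G] {d : ℕ} (hd : 3 ≤ d)
    (hν : ν ∈ stdSimplex ℝ G) :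
    Fintype.card G * zeroSumPartition d ν
      ≤ ∑ ψ, ‖charTransform (fun a => (√(ν a) : ℂ)) ψ‖ ^ 2
          * ‖charTransform (fun a => (ν a : ℂ)) ψ‖ := by
  obtain ⟨k, rfl⟩ := Nat.exists_eq_add_of_le' hd
  let e : Fin (k + 3) → ℝ := Matrix.vecCons (1 / 2) (Matrix.vecCons (1 / 2) fun _ => 1)
  have he : ∑ j, e j = ((k + 3 : ℕ) : ℝ) - 1 := by
    simp only [e, Fin.sum_univ_succ (n := k + 2), Fin.sum_univ_succ (n := k + 1),
      Matrix.cons_val_zero, Matrix.cons_val_succ]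
    simp
    ring
  have he0 : ∀ i, 0 ≤ e i := by
    simp [e, Fin.forall_fin_succ (n := k + 2), Fin.forall_fin_succ (n := k + 1)]
  have key := sum_zero_sum_prod_rpow_le hν.1 he0
  rw [he] at key
  have fourier := card_mul_sum_sum_eq_zero fun (i : Fin (k + 3)) a => ((ν a ^ e i : ℝ) : ℂ)
  have norm_term (ψ : AddChar G ℂ) :
      ‖∏ i, charTransform (fun a => ((ν a ^ e i : ℝ) : ℂ)) ψ‖
        = ‖charTransform (fun a => (√(ν a) : ℂ)) ψ‖ ^ 2
          * ‖charTransform (fun a => (ν a : ℂ)) ψ‖ ^ (k + 1) := by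
    rw [norm_prod, Fin.prod_univ_succ (n := k + 2), Fin.prod_univ_succ (n := k + 1)]
    simp only [e, Matrix.cons_val_zero, Matrix.cons_val_succ, Real.rpow_one, Real.sqrt_eq_rpow]
    simp
    ring
  calc Fintype.card G * zeroSumPartition (k + 3) ν
      ≤ Fintype.card G * ∑ u : Fin (k + 3) → G with ∑ i, u i = 0, ∏ i, ν (u i) ^ e i := by
        gcongr
        exact key
    _ ≤ ‖∑ ψ, ∏ i, charTransform (fun a => ((ν a ^ e i : ℝ) : ℂ)) ψ‖ := by
        rw [← fourier]
        refine (le_abs_self _).trans_eq ?_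
        rw [← Real.norm_eq_abs, ← Complex.norm_real]
        push_cast
        rfl
    _ ≤ _ := by
        refine (norm_sum_le _ _).trans (sum_le_sum fun ψ _ => ?_)
        rw [norm_term]
        gcongr
        exact pow_le_of_le_one (norm_nonneg _) (norm_charTransform_le_one hν ψ) (by simp)

lemma sum_norm_sq_mul_one_sub_norm_le [DecidableEq G] {d : ℕ} (hd : 3 ≤ d)
    (hν : ν ∈ stdSimplex ℝ G) :
    ∑ ψ, ‖charTransform (fun a => (√(ν a) : ℂ)) ψ‖ ^ 2
        * (1 - ‖charTransform (fun a => (ν a : ℂ)) ψ‖)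
      ≤ Fintype.card G * (1 - zeroSumPartition d ν) := by
  simp only [mul_sub, mul_one, sum_sub_distrib, sum_norm_sq_charTransform_sqrt hν]
  linarith [card_mul_zeroSumPartition_le hd hν]

/-- The squared Hellinger distance between the distribution `ν` and its translate by `u`. -/
noncomputable def hellingerShift (ν : G → ℝ) (u : G) : ℝ := 1 - ∑ a, √(ν a) * √(ν (a + u))

lemma sum_comp_add_right (hν : ν ∈ stdSimplex ℝ G) (u : G) : ∑ a, ν (a + u) = 1 :=
  (Equiv.sum_comp (Equiv.addRight u) ν).trans hν.2

lemma two_mul_hellingerShift (hν : ν ∈ stdSimplex ℝ G) (u : G) :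
    2 * hellingerShift ν u = ∑ a, (√(ν a) - √(ν (a + u))) ^ 2 := by
  simp only [hellingerShift, sub_sq, Real.sq_sqrt (hν.1 _), sum_add_distrib, sum_sub_distrib,
    sum_comp_add_right hν, hν.2, mul_assoc, ← mul_sum]
  ring

lemma hellingerShift_nonneg (hν : ν ∈ stdSimplex ℝ G) (u : G) : 0 ≤ hellingerShift ν u := by
  have := two_mul_hellingerShift hν u
  have : 0 ≤ ∑ a, (√(ν a) - √(ν (a + u))) ^ 2 := sum_nonneg fun _ _ => sq_nonneg _
  linarith

lemma hellingerShift_nsmul_le (hν : ν ∈ stdSimplex ℝ G) (u : G) (j : ℕ) :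
    hellingerShift ν (j • u) ≤ (j : ℝ) ^ 2 * hellingerShift ν u := by
  have telescope (a : G) : (√(ν a) - √(ν (a + j • u))) ^ 2
      ≤ j * ∑ i ∈ range j, (√(ν (a + i • u)) - √(ν (a + i • u + u))) ^ 2 := by
    have hsum := sum_range_sub' (fun i : ℕ => √(ν (a + i • u))) j
    simp only [zero_smul, add_zero, succ_nsmul, ← add_assoc] at hsum
    rw [← hsum]
    exact sq_sum_le_card_mul_sum_sq.trans_eq (by simp)
  have translate (i : ℕ) : ∑ a, (√(ν (a + i • u)) - √(ν (a + i • u + u))) ^ 2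
      = 2 * hellingerShift ν u := by
    rw [two_mul_hellingerShift hν]
    exact Equiv.sum_comp (Equiv.addRight (i • u)) fun a => (√(ν a) - √(ν (a + u))) ^ 2
  have key : 2 * hellingerShift ν (j • u) ≤ (j : ℝ) ^ 2 * (2 * hellingerShift ν u) := by
    rw [two_mul_hellingerShift hν]
    refine (sum_le_sum fun a _ => telescope a).trans_eq ?_
    rw [← mul_sum, sum_comm]
    simp only [translate, sum_const, card_range, nsmul_eq_mul]
    ring
  linarith

lemma sum_hellingerShift (ν : G → ℝ) :
    ∑ u, hellingerShift ν u = Fintype.card G - (∑ a, √(ν a)) ^ 2 := by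
  simp only [hellingerShift, sum_sub_distrib, sum_const, card_univ, nsmul_eq_mul, mul_one]
  rw [sum_comm, sq, sum_mul_sum]
  exact congrArg _ (sum_congr rfl fun a _ => by
    simp only [← mul_sum, ← Equiv.sum_comp (Equiv.addLeft a) (fun a => √(ν a)),
      Equiv.coe_addLeft])

lemma sum_mul_hellingerShift_le [DecidableEq G] {d : ℕ} (hd : 3 ≤ d)
    (hν : ν ∈ stdSimplex ℝ G) :
    ∑ t, ∑ s, ν t * ν s * hellingerShift ν (t - s) ≤ 2 * (1 - zeroSumPartition d ν) := by
  set F : AddChar G ℂ → ℝ := fun ψ => ‖charTransform (fun a => (√(ν a) : ℂ)) ψ‖ with hF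
  set N : AddChar G ℂ → ℝ := fun ψ => ‖charTransform (fun a => (ν a : ℂ)) ψ‖ with hN
  have card_pos : (0 : ℝ) < Fintype.card G := by exact_mod_cast Fintype.card_pos
  have upper : ∑ ψ, F ψ ^ 2 * (1 - N ψ ^ 2)
      ≤ 2 * (Fintype.card G * (1 - zeroSumPartition d ν)) := by
    refine le_trans ?_ (mul_le_mul_of_nonneg_left (sum_norm_sq_mul_one_sub_norm_le hd hν)
      zero_le_two)
    rw [mul_sum]
    refine sum_le_sum fun ψ _ => ?_
    have : 1 - N ψ ^ 2 ≤ 2 * (1 - N ψ) := by linarith [sq_nonneg (N ψ - 1)]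
    have := mul_le_mul_of_nonneg_left this (sq_nonneg (F ψ))
    simp only [hF, hN] at this ⊢
    linarith
  have cross : ∑ ψ, F ψ ^ 2 * N ψ ^ 2
      = Fintype.card G * ∑ t, ∑ s, ν t * ν s * ∑ a, √(ν a) * √(ν (a + (t - s))) := by
    have := sum_norm_sq_mul_norm_sq_charTransform (fun a => (√(ν a) : ℂ)) fun a => (ν a : ℂ)
    simp only [Complex.conj_ofReal] at this
    exact_mod_cast this
  have energy : ∑ t, ∑ s, ν t * ν s * hellingerShift ν (t - s)
      = 1 - ∑ t, ∑ s, ν t * ν s * ∑ a, √(ν a) * √(ν (a + (t - s))) := by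
    simp only [hellingerShift, mul_sub, mul_one, sum_sub_distrib, ← sum_mul_sum, hν.2]
  simp only [mul_sub, mul_one, sum_sub_distrib, cross] at upper
  rw [hF, sum_norm_sq_charTransform_sqrt hν] at upper
  rw [energy]
  refine le_of_mul_le_mul_left ?_ card_pos
  linarith

lemma one_sub_sum_sq_mul_le (hν : ν ∈ stdSimplex ℝ G) {c : ℝ}
    (hc : ∀ u ≠ 0, c ≤ hellingerShift ν u) :
    (1 - ∑ t, ν t ^ 2) * c ≤ ∑ t, ∑ s, ν t * ν s * hellingerShift ν (t - s) := by
  classical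
  have off_diag (t : G) : ∑ s ∈ univ.erase t, ν s = 1 - ν t := by
    rw [← hν.2, ← add_sum_erase _ _ (mem_univ t)]
    ring
  have term_nonneg (t s : G) : 0 ≤ ν t * ν s * hellingerShift ν (t - s) :=
    mul_nonneg (mul_nonneg (hν.1 _) (hν.1 _)) (hellingerShift_nonneg hν _)
  calc (1 - ∑ t, ν t ^ 2) * c = ∑ t, ∑ s ∈ univ.erase t, ν t * ν s * c := by
        simp only [← sum_mul, ← mul_sum, off_diag, mul_sub, mul_one, sum_sub_distrib, hν.2, sq]
    _ ≤ ∑ t, ∑ s ∈ univ.erase t, ν t * ν s * hellingerShift ν (t - s) := by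
        gcongr with t _ s hs
        · exact mul_nonneg (hν.1 _) (hν.1 _)
        · exact hc _ (sub_ne_zero.2 (ne_of_mem_erase hs).symm)
    _ ≤ _ := sum_le_sum fun t _ =>
        sum_le_sum_of_subset_of_nonneg (erase_subset _ _) fun s _ _ => term_nonneg t s

lemma three_quarters_le_hellingerShift (hν : ν ∈ stdSimplex ℝ G) (h0 : 63 / 64 ≤ ν 0) {u : G}
    (hu : u ≠ 0) : 3 / 4 ≤ hellingerShift ν u := by
  classical
  have off_zero : ∑ a ∈ univ.erase 0, ν a ≤ 1 / 64 := by
    have := add_sum_erase _ ν (mem_univ (0 : G))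
    linarith [hν.2]
  have at_zero : √(ν 0) * √(ν (0 + u)) ≤ 1 * (1 / 8) := by
    have hu' : ν u ≤ (1 / 8) ^ 2 :=
      (single_le_sum (fun b _ => hν.1 b) (mem_erase.2 ⟨hu, mem_univ u⟩)).trans
        (off_zero.trans_eq (by norm_num))
    rw [zero_add]
    gcongr
    · exact Real.sqrt_le_one.2 (hν.2 ▸ single_le_sum (fun b _ => hν.1 b) (mem_univ 0))
    · exact (Real.sqrt_le_left (by norm_num)).2 hu'
  have elsewhere : ∑ a ∈ univ.erase 0, √(ν a) * √(ν (a + u)) ≤ 1 / 8 := by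
    refine le_of_sq_le_sq ?_ (by norm_num)
    refine (sum_mul_sq_le_sq_mul_sq _ _ _).trans ?_
    simp only [Real.sq_sqrt (hν.1 _)]
    have : ∑ a ∈ univ.erase 0, ν (a + u) ≤ 1 := (sum_le_sum_of_subset_of_nonneg
      (erase_subset _ _) fun b _ _ => hν.1 _).trans_eq (sum_comp_add_right hν u)
    calc _ ≤ (1 / 64 : ℝ) * 1 :=
          mul_le_mul off_zero this (sum_nonneg fun _ _ => hν.1 _) (by norm_num)
      _ = _ := by norm_num
  rw [hellingerShift, ← add_sum_erase _ _ (mem_univ (0 : G))]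
  linarith

lemma one_sub_apply_zero_le [DecidableEq G] {d : ℕ} (hd : 3 ≤ d) (hν : ν ∈ stdSimplex ℝ G)
    (h0 : 63 / 64 ≤ ν 0) : 1 - ν 0 ≤ 8 * (1 - zeroSumPartition d ν) := by
  have energy := (one_sub_sum_sq_mul_le hν fun _ hu =>
    three_quarters_le_hellingerShift hν h0 hu).trans (sum_mul_hellingerShift_le hd hν)
  have sum_sq_le : ∑ a, ν a ^ 2 ≤ ν 0 ^ 2 + (1 - ν 0) ^ 2 := by
    rw [← hν.2, ← add_sum_erase _ ν (mem_univ 0), add_sub_cancel_left,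
      ← add_sum_erase _ (ν · ^ 2) (mem_univ 0)]
    gcongr
    exact sum_sq_le_sq_sum_of_nonneg fun a _ => hν.1 a
  have le_one : ν 0 ≤ 1 := hν.2 ▸ single_le_sum (fun b _ => hν.1 b) (mem_univ 0)
  nlinarith [mul_nonneg (sub_nonneg.2 le_one) (sub_nonneg.2 h0)]

end SpectralGap

section UniformDefect

variable {κ : Type*} [Fintype κ] {ν : κ → ℝ}

/-- One minus the squared Bhattacharyya coefficient of the distribution `ν` and the uniform one;
it measures how far `ν` is from uniform. -/
noncomputable def uniformDefect (ν : κ → ℝ) : ℝ := 1 - (∑ a, √(ν a)) ^ 2 / Fintype.card κ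

lemma sum_sq_sqrt_add_sqrt_inv_card (hν : ν ∈ stdSimplex ℝ κ) [Nonempty κ] (σ : ℝ)
    (hσ : σ ^ 2 = 1) :
    ∑ a, (√(ν a) + σ * √(Fintype.card κ)⁻¹) ^ 2
      = 2 + 2 * σ * ((∑ a, √(ν a)) * √(Fintype.card κ)⁻¹) := by
  have card_ne : (Fintype.card κ : ℝ) ≠ 0 := by simp
  simp only [add_sq, mul_pow, hσ, Real.sq_sqrt (hν.1 _), sum_add_distrib, hν.2,
    Real.sq_sqrt (inv_nonneg.2 (Nat.cast_nonneg _)), one_mul, sum_const, card_univ, nsmul_eq_mul,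
    mul_inv_cancel₀ card_ne, sum_mul, mul_sum]
  rw [add_right_comm, one_add_one_eq_two]
  exact congrArg _ (sum_congr rfl fun a _ => by ring)

lemma uniformDefect_eq (ν : κ → ℝ) :
    uniformDefect ν = 1 - ((∑ a, √(ν a)) * √(Fintype.card κ)⁻¹) ^ 2 := by
  rw [uniformDefect, mul_pow, Real.sq_sqrt (by positivity), div_eq_mul_inv]

variable [Nonempty κ]

lemma sum_sq_sqrt_sub_le (hν : ν ∈ stdSimplex ℝ κ) :
    ∑ a, (√(ν a) - √(Fintype.card κ)⁻¹) ^ 2 ≤ 2 * uniformDefect ν := by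
  have hsum := sum_sq_sqrt_add_sqrt_inv_card hν (-1) (by norm_num)
  simp only [neg_one_mul, ← sub_eq_add_neg] at hsum
  have le_one : 0 ≤ ∑ a, (√(ν a) - √(Fintype.card κ)⁻¹) ^ 2 := sum_nonneg fun _ _ => sq_nonneg _
  have : 0 ≤ (∑ a, √(ν a)) * √(Fintype.card κ)⁻¹ := by positivity
  rw [uniformDefect_eq]
  nlinarith

lemma sq_sum_abs_sub_inv_card_le (hν : ν ∈ stdSimplex ℝ κ) :
    (∑ a, |ν a - (Fintype.card κ : ℝ)⁻¹|) ^ 2 ≤ 4 * uniformDefect ν := by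
  set c := √(Fintype.card κ : ℝ)⁻¹ with hc
  have c_sq : c ^ 2 = (Fintype.card κ : ℝ)⁻¹ := Real.sq_sqrt (by positivity)
  have factor (a : κ) : |ν a - (Fintype.card κ : ℝ)⁻¹| = |√(ν a) - c| * |√(ν a) + c| := by
    rw [← abs_mul, ← c_sq]
    nth_rw 1 [← Real.sq_sqrt (hν.1 a)]
    ring_nf
  have minus := sum_sq_sqrt_add_sqrt_inv_card hν (-1) (by norm_num)
  have plus := sum_sq_sqrt_add_sqrt_inv_card hν 1 (by norm_num)
  simp only [neg_one_mul, one_mul, ← sub_eq_add_neg, ← hc] at minus plus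
  simp only [factor]
  refine (sum_mul_sq_le_sq_mul_sq _ _ _).trans_eq ?_
  simp only [sq_abs, minus, plus, uniformDefect_eq, ← hc]
  ring

lemma sq_sqrt_card_mul_sub_one (ν : κ → ℝ) (a : κ) :
    (√(Fintype.card κ * ν a) - 1) ^ 2
      = Fintype.card κ * (√(ν a) - √(Fintype.card κ)⁻¹) ^ 2 := by
  have card_pos : (0 : ℝ) < Fintype.card κ := by exact_mod_cast Fintype.card_pos
  have factor : √(Fintype.card κ * ν a) - 1
      = √(Fintype.card κ) * (√(ν a) - √(Fintype.card κ)⁻¹) := by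
    rw [mul_sub, ← Real.sqrt_mul card_pos.le, ← Real.sqrt_mul card_pos.le,
      mul_inv_cancel₀ card_pos.ne', Real.sqrt_one]
  rw [factor, mul_pow, Real.sq_sqrt card_pos.le]

lemma abs_sqrt_card_mul_sub_one_le (hν : ν ∈ stdSimplex ℝ κ)
    (h : 32 * Fintype.card κ * uniformDefect ν ≤ 1) (a : κ) :
    |√(Fintype.card κ * ν a) - 1| ≤ 1 / 4 := by
  refine abs_le_of_sq_le_sq ?_ (by norm_num)
  have : (√(ν a) - √(Fintype.card κ)⁻¹) ^ 2 ≤ 2 * uniformDefect ν :=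
    (single_le_sum (f := fun a => (√(ν a) - √(Fintype.card κ)⁻¹) ^ 2)
      (fun _ _ => sq_nonneg _) (mem_univ a)).trans (sum_sq_sqrt_sub_le hν)
  have := mul_le_mul_of_nonneg_left this (Nat.cast_nonneg (α := ℝ) (Fintype.card κ))
  rw [sq_sqrt_card_mul_sub_one]
  linarith

lemma half_le_card_mul_of_uniformDefect_le (hν : ν ∈ stdSimplex ℝ κ)
    (h : 32 * Fintype.card κ * uniformDefect ν ≤ 1) (a : κ) : 1 / 2 ≤ Fintype.card κ * ν a := by
  have := (abs_le.1 (abs_sqrt_card_mul_sub_one_le hν h a)).1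
  have := Real.sq_sqrt (mul_nonneg (Nat.cast_nonneg (α := ℝ) (Fintype.card κ)) (hν.1 a))
  nlinarith

lemma card_mul_sum_sq_sub_one_le (hν : ν ∈ stdSimplex ℝ κ)
    (h : 32 * Fintype.card κ * uniformDefect ν ≤ 1) :
    Fintype.card κ * ∑ a, ν a ^ 2 - 1 ≤ 81 / 8 * uniformDefect ν := by
  have card_pos : (0 : ℝ) < Fintype.card κ := by exact_mod_cast Fintype.card_pos
  have variance : ∑ a, (Fintype.card κ * ν a - 1) ^ 2
      = Fintype.card κ * (Fintype.card κ * ∑ a, ν a ^ 2 - 1) := by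
    simp only [sub_sq, mul_pow, mul_one, one_pow, sum_add_distrib, sum_sub_distrib, ← mul_sum,
      hν.2, sum_const, card_univ, nsmul_eq_mul]
    ring
  have pointwise (a : κ) : (Fintype.card κ * ν a - 1) ^ 2
      ≤ 81 / 16 * (Fintype.card κ * (√(ν a) - √(Fintype.card κ)⁻¹) ^ 2) := by
    have bound := abs_le.1 (abs_sqrt_card_mul_sub_one_le hν h a)
    rw [← sq_sqrt_card_mul_sub_one]
    nth_rw 1 [← Real.sq_sqrt (mul_nonneg card_pos.le (hν.1 a))]
    calc (√(Fintype.card κ * ν a) ^ 2 - 1) ^ 2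
        = (√(Fintype.card κ * ν a) + 1) ^ 2 * (√(Fintype.card κ * ν a) - 1) ^ 2 := by ring
      _ ≤ _ := by
        gcongr
        nlinarith
  have total := sum_le_sum fun a (_ : a ∈ univ) => pointwise a
  rw [variance, ← mul_sum, ← mul_sum] at total
  refine le_of_mul_le_mul_left ?_ card_pos
  nlinarith [sum_sq_sqrt_sub_le hν]

end UniformDefect

section SpreadGap

variable {G : Type*} [AddCommGroup G] [Fintype G] {ν : G → ℝ}

lemma norm_charTransform_le_sum_abs_sub {ψ : AddChar G ℂ} (hψ : ψ ≠ 0) (ν : G → ℝ) (c : ℝ) :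
    ‖charTransform (fun a => (ν a : ℂ)) ψ‖ ≤ ∑ a, |ν a - c| := by
  have : charTransform (fun a => (ν a : ℂ)) ψ = charTransform (fun a => ((ν a - c : ℝ) : ℂ)) ψ := by
    simp only [charTransform, Complex.ofReal_sub, sub_mul, sum_sub_distrib, ← mul_sum,
      AddChar.sum_eq_zero_iff_ne_zero.2 hψ, mul_zero, sub_zero]
  rw [this]
  exact (norm_charTransform_le _ _).trans_eq (by simp only [Complex.norm_real, Real.norm_eq_abs])

lemma uniformDefect_le_of_uniformDefect_le [DecidableEq G] {d : ℕ} (hd : 3 ≤ d)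
    (hν : ν ∈ stdSimplex ℝ G) (h : uniformDefect ν ≤ 1 / 16) :
    uniformDefect ν ≤ 2 * (1 - zeroSumPartition d ν) := by
  set F : AddChar G ℂ → ℝ := fun ψ => ‖charTransform (fun a => (√(ν a) : ℂ)) ψ‖ ^ 2 with hF
  have card_pos : (0 : ℝ) < Fintype.card G := by exact_mod_cast Fintype.card_pos
  have norm_le (ψ : AddChar G ℂ) (hψ : ψ ≠ 0) :
      ‖charTransform (fun a => (ν a : ℂ)) ψ‖ ≤ 1 / 2 := by
    refine (norm_charTransform_le_sum_abs_sub hψ ν (Fintype.card G : ℝ)⁻¹).trans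
      (le_of_sq_le_sq ?_ (by norm_num))
    exact (sq_sum_abs_sub_inv_card_le hν).trans (by linarith)
  have nontrivial_mass : ∑ ψ ∈ univ.erase 0, F ψ = Fintype.card G * uniformDefect ν := by
    have at_zero : F 0 = (∑ a, √(ν a)) ^ 2 := by
      have : charTransform (fun a => (√(ν a) : ℂ)) 0 = ((∑ a, √(ν a) : ℝ) : ℂ) := by
        simp [charTransform]
      rw [hF]
      simp only [this, Complex.norm_real, Real.norm_eq_abs, sq_abs]
    have total := sum_norm_sq_charTransform_sqrt hν
    rw [← add_sum_erase _ _ (mem_univ 0)] at total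
    rw [uniformDefect, mul_sub, mul_div_cancel₀ _ card_pos.ne', ← at_zero]
    linarith
  have gap : (∑ ψ ∈ univ.erase 0, F ψ) * (1 / 2)
      ≤ Fintype.card G * (1 - zeroSumPartition d ν) := by
    refine le_trans ?_ (sum_norm_sq_mul_one_sub_norm_le hd hν)
    rw [sum_mul]
    refine (sum_le_sum fun ψ hψ => ?_).trans (sum_le_sum_of_subset_of_nonneg
      (erase_subset 0 univ) fun ψ _ _ => mul_nonneg (sq_nonneg _)
        (sub_nonneg.2 (norm_charTransform_le_one hν ψ)))
    exact mul_le_mul_of_nonneg_left (by linarith [norm_le ψ (ne_of_mem_erase hψ)]) (sq_nonneg _)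
  refine le_of_mul_le_mul_left ?_ card_pos
  linarith

lemma uniformDefect_le_of_hellingerShift_le {D : ℝ} (hD : ∀ u, hellingerShift ν u ≤ D) :
    uniformDefect ν ≤ D := by
  have card_pos : (0 : ℝ) < Fintype.card G := by exact_mod_cast Fintype.card_pos
  refine le_of_mul_le_mul_left ?_ card_pos
  rw [uniformDefect, mul_sub, mul_div_cancel₀ _ card_pos.ne', mul_one, ← sum_hellingerShift]
  exact (sum_le_sum fun u _ => hD u).trans_eq (by simp)

lemma hellingerShift_le_sq_mul {p : ℕ} [Fact p.Prime] {ν : ZMod p → ℝ}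
    (hν : ν ∈ stdSimplex ℝ (ZMod p)) {u : ZMod p} (hu : u ≠ 0) (w : ZMod p) :
    hellingerShift ν w ≤ (p : ℝ) ^ 2 * hellingerShift ν u := by
  have hw : w = (w / u).val • u := by
    rw [nsmul_eq_mul, ZMod.natCast_zmod_val, div_mul_cancel₀ _ hu]
  rw [hw]
  refine (hellingerShift_nsmul_le hν u _).trans ?_
  gcongr
  · exact hellingerShift_nonneg hν u
  · exact (ZMod.val_lt _).le

/-- The cheapest nonzero shift generates `ZMod p`, so a distribution of small energy which is not
concentrated at one point is almost invariant, hence almost uniform. -/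
lemma uniformDefect_le_of_spread {p d : ℕ} [Fact p.Prime] (hd : 3 ≤ d) {ν : ZMod p → ℝ}
    (hν : ν ∈ stdSimplex ℝ (ZMod p)) {ε : ℝ} (hε : 0 < ε) (hspread : ∀ a, ν a ≤ 1 - ε)
    (hgap : 32 * (p : ℝ) ^ 2 * (1 - zeroSumPartition d ν) ≤ ε) :
    uniformDefect ν ≤ 2 * (1 - zeroSumPartition d ν) := by
  obtain ⟨u, hu, hmin⟩ := exists_min_image (univ.erase (0 : ZMod p)) (hellingerShift ν)
    ⟨1, by simp⟩
  have energy : ε * hellingerShift ν u ≤ 2 * (1 - zeroSumPartition d ν) := by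
    have sum_sq_le : ∑ a, ν a ^ 2 ≤ 1 - ε := by
      calc ∑ a, ν a ^ 2 ≤ ∑ a, (1 - ε) * ν a := sum_le_sum fun a _ => by
            nlinarith [hspread a, hν.1 a]
        _ = 1 - ε := by rw [← mul_sum, hν.2, mul_one]
    refine le_trans ?_ ((one_sub_sum_sq_mul_le hν fun w hw => hmin w (by simpa using hw)).trans
      (sum_mul_hellingerShift_le hd hν))
    exact mul_le_mul_of_nonneg_right (by linarith) (hellingerShift_nonneg hν u)
  have defect_le : uniformDefect ν ≤ (p : ℝ) ^ 2 * hellingerShift ν u :=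
    uniformDefect_le_of_hellingerShift_le (hellingerShift_le_sq_mul hν (ne_of_mem_erase hu))
  refine uniformDefect_le_of_uniformDefect_le hd hν (le_of_mul_le_mul_left ?_ hε)
  nlinarith [mul_le_mul_of_nonneg_left defect_le hε.le,
    mul_le_mul_of_nonneg_left energy (sq_nonneg (p : ℝ))]

end SpreadGap

/-! ### Types of small zero-sum partition function -/

lemma stirlingSeq_le_sqrt_pi_mul_exp {m : ℕ} (hm : m ≠ 0) :
    Stirling.stirlingSeq m ≤ √Real.pi * Real.exp (1 / (12 * m)) := by
  have pos (j : ℕ) : 0 < Stirling.stirlingSeq (m + j) := by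
    rw [← Nat.succ_pred_eq_of_ne_zero (by lia : m + j ≠ 0)]
    exact Stirling.stirlingSeq'_pos _
  have pos_m : 0 < Stirling.stirlingSeq m := pos 0
  have log_sub_le (j : ℕ) :
      Real.log (Stirling.stirlingSeq m) - Real.log (Stirling.stirlingSeq (m + j))
        ≤ 1 / (12 * m) - 1 / (12 * ((m : ℝ) + j)) := by
    induction j with
    | zero => simp
    | succ j ih =>
      have : (0 : ℝ) < m + j := by positivity
      have telescope : 1 / (12 * ((m + j : ℕ) : ℝ) * ((m + j : ℕ) + 1))
          = 1 / (12 * ((m : ℝ) + j)) - 1 / (12 * ((m : ℝ) + (j + 1 : ℕ))) := by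
        push_cast
        field_simp
        ring
      have step := Stirling.log_stirlingSeq_sdiff_le (m + j)
      rw [telescope] at step
      rw [← add_assoc]
      linarith
  have le_tail (j : ℕ) :
      Stirling.stirlingSeq m ≤ Stirling.stirlingSeq (m + j) * Real.exp (1 / (12 * m)) := by
    have pos_j := pos j
    rw [← Real.log_le_log_iff pos_m (by positivity), Real.log_mul pos_j.ne' (Real.exp_pos _).ne',
      Real.log_exp]
    have : 0 ≤ 1 / (12 * ((m : ℝ) + j)) := by positivity
    linarith [log_sub_le j]
  have tail_tendsto : Filter.Tendsto (fun j => Stirling.stirlingSeq (m + j)) Filter.atTop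
      (nhds √Real.pi) := by
    simpa only [add_comm] using
      (Filter.tendsto_add_atTop_iff_nat m).2 Stirling.tendsto_stirlingSeq_sqrt_pi
  exact ge_of_tendsto' (tail_tendsto.mul_const _) le_tail

lemma factorial_le_stirling {m : ℕ} (hm : m ≠ 0) :
    (m ! : ℝ) ≤ √(2 * Real.pi * m) * (m / Real.exp 1) ^ m * Real.exp (1 / (12 * m)) := by
  have h := stirlingSeq_le_sqrt_pi_mul_exp hm
  rw [Stirling.stirlingSeq, div_le_iff₀ (by positivity)] at h
  rw [mul_comm 2 Real.pi, mul_assoc Real.pi, Real.sqrt_mul Real.pi_pos.le]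
  exact h.trans_eq (by ring)

lemma factorial_le_mul_div_exp_pow (m : ℕ) :
    (m ! : ℝ) ≤ 3 * (m + 1) * (m / Real.exp 1) ^ m := by
  rcases eq_or_ne m 0 with rfl | hm
  · simp
  have one_le : (1 : ℝ) ≤ m := by exact_mod_cast Nat.one_le_iff_ne_zero.2 hm
  have exp_le : Real.exp (1 / (12 * m)) ≤ 12 / 11 := by
    have : (1 : ℝ) / (12 * m) ≤ 1 / 12 := by gcongr; linarith
    refine (Real.exp_le_exp.2 this).trans ?_
    exact (Real.exp_bound_div_one_sub_of_interval (by norm_num) (by norm_num)).trans (by norm_num)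
  have sqrt_le : √(2 * Real.pi * m) ≤ 2.6 * m := by
    rw [Real.sqrt_le_left (by positivity)]
    nlinarith [Real.pi_lt_d2]
  calc (m ! : ℝ) ≤ √(2 * Real.pi * m) * (m / Real.exp 1) ^ m * Real.exp (1 / (12 * m)) :=
        factorial_le_stirling hm
    _ ≤ (2.6 * m) * (m / Real.exp 1) ^ m * (12 / 11) := by gcongr
    _ = (2.6 * m * (12 / 11)) * (m / Real.exp 1) ^ m := by ring
    _ ≤ 3 * (m + 1) * (m / Real.exp 1) ^ m :=
        mul_le_mul_of_nonneg_right (by linarith) (by positivity)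

-- Up to polynomial factors, a multinomial coefficient is the exponential of an entropy.
lemma prod_factorial_le {κ : Type*} [Fintype κ] (m : κ → ℕ) {N : ℕ} (hN : N ≠ 0)
    (hm : ∑ a, m a = N) :
    ∏ a, ((m a)! : ℝ)
      ≤ (3 * (N + 1)) ^ Fintype.card κ * N ! * ∏ a, ((m a : ℝ) / N) ^ m a := by
  have one_le : (1 : ℝ) ≤ N := by exact_mod_cast Nat.one_le_iff_ne_zero.2 hN
  have factor_le (a : κ) : ((m a)! : ℝ)
      ≤ 3 * (N + 1) * ((N / Real.exp 1) ^ m a * ((m a : ℝ) / N) ^ m a) := by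
    have m_le : m a ≤ N := hm ▸ single_le_sum (fun _ _ => Nat.zero_le _) (mem_univ a)
    have : (N : ℝ) / Real.exp 1 * ((m a : ℝ) / N) = m a / Real.exp 1 := by field_simp
    rw [← mul_pow, this]
    exact (factorial_le_mul_div_exp_pow _).trans (by gcongr)
  have stirling : ((N : ℝ) / Real.exp 1) ^ N ≤ N ! := by
    refine (le_mul_of_one_le_left (by positivity) ?_).trans (Stirling.le_factorial_stirling N)
    rw [Real.one_le_sqrt]
    nlinarith [Real.pi_gt_three]
  calc ∏ a, ((m a)! : ℝ)
      ≤ ∏ a, 3 * (N + 1) * ((N / Real.exp 1) ^ m a * ((m a : ℝ) / N) ^ m a) :=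
        prod_le_prod (fun a _ => by positivity) fun a _ => factor_le a
    _ = (3 * (N + 1)) ^ Fintype.card κ * ((N : ℝ) / Real.exp 1) ^ N
          * ∏ a, ((m a : ℝ) / N) ^ m a := by
        rw [prod_mul_distrib, prod_const, card_univ, prod_mul_distrib, prod_pow_eq_pow_sum, hm,
          mul_assoc]
    _ ≤ _ := by gcongr

section EmpiricalDist

variable {X κ : Type*} [Fintype X] [DecidableEq κ]

/-- The empirical distribution of the letters of the word `w`. -/
noncomputable def empiricalDist (w : X → κ) (a : κ) : ℝ := fiberCard w a / Fintype.card X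

lemma empiricalDist_nonneg (w : X → κ) (a : κ) : 0 ≤ empiricalDist w a := by
  unfold empiricalDist
  positivity

lemma empiricalDist_mem_stdSimplex [Fintype κ] [Nonempty X] (w : X → κ) :
    empiricalDist w ∈ stdSimplex ℝ κ := by
  refine ⟨empiricalDist_nonneg w, ?_⟩
  simp only [empiricalDist]
  rw [← sum_div, ← Nat.cast_sum, sum_fiberCard, div_self (by simp)]

lemma empiricalDist_pow_pos (w : X → κ) (a : κ) (k : ℕ) :
    0 < empiricalDist w a ^ (k * fiberCard w a) := by
  rcases Nat.eq_zero_or_pos (fiberCard w a) with h | h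
  · simp [h]
  · have : Nonempty X := (Fintype.card_pos_iff.1 (h.trans_le (fiberCard_le_card w a)))
    unfold empiricalDist
    positivity

lemma card_fiberCard_eq_mul_prod_pow_le [DecidableEq X] [Fintype κ] [Nonempty X] (w : X → κ) :
    #{w' : X → κ | fiberCard w' = fiberCard w} * ∏ a, empiricalDist w a ^ fiberCard w a ≤ 1 := by
  have total : ∑ w' : X → κ, ∏ x, empiricalDist w (w' x) = 1 := by
    rw [← Fintype.piFinset_univ, ← prod_univ_sum, (empiricalDist_mem_stdSimplex w).2,
      prod_const_one]
  rw [← total, ← nsmul_eq_mul, ← sum_const]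
  refine (sum_congr rfl fun w' hw' => ?_).le.trans (sum_le_sum_of_subset_of_nonneg
    (filter_subset (fun w' => fiberCard w' = fiberCard w) _)
    fun w' _ _ => prod_nonneg fun x _ => empiricalDist_nonneg w _)
  rw [prod_comp_eq_prod_pow_fiberCard, (mem_filter.1 hw').2]

lemma prod_factorial_mul_fiberCard_le [Fintype κ] {d n : ℕ} [NeZero n] (hd : d ≠ 0)
    (v : Fin n → κ) :
    ∏ a, ((d * fiberCard v a)! : ℝ)
      ≤ (3 * (n * d + 1)) ^ Fintype.card κ * (n * d)!
        * ∏ a, empiricalDist v a ^ (d * fiberCard v a) := by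
  have h := prod_factorial_le (fun a => d * fiberCard v a) (mul_ne_zero (NeZero.ne n) hd)
    (by rw [← mul_sum, sum_fiberCard, Fintype.card_fin, mul_comm])
  have freq (a : κ) : ((d * fiberCard v a : ℕ) : ℝ) / (n * d : ℕ) = empiricalDist v a := by
    rw [empiricalDist, Fintype.card_fin, Nat.cast_mul, Nat.cast_mul, mul_comm (n : ℝ),
      mul_div_mul_left _ _ (Nat.cast_ne_zero.2 hd)]
  simp only [freq] at h
  exact_mod_cast h

lemma card_image_fiberCard_le [Fintype κ] {n : ℕ} (S : Finset (Fin n → κ)) :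
    #(S.image fiberCard) ≤ (n + 1) ^ Fintype.card κ := by
  refine (card_le_card (t := Fintype.piFinset fun _ : κ => range (n + 1)) ?_).trans
    (by simp)
  simp only [image_subset_iff, Fintype.mem_piFinset, mem_range, Nat.lt_succ_iff]
  exact fun v _ a => (fiberCard_le_card v a).trans_eq (Fintype.card_fin n)

end EmpiricalDist

section Types

variable {G : Type*} [AddCommGroup G] [Fintype G] [DecidableEq G] {d n : ℕ}

lemma rowWordCount_mul_prod_empiricalDist_pow_le (hd : d ≠ 0) (v : Fin n → G) :
    (rowWordCount n (fun u : Fin d → G => ∑ i, u i = 0) fun a => d * fiberCard v a)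
        * ∏ a, empiricalDist v a ^ ((d - 1) * fiberCard v a)
      ≤ zeroSumPartition d (empiricalDist v) ^ n := by
  refine le_trans (le_of_eq ?_) (rowWordCount_mul_prod_pow_le n _ (fun a => d * fiberCard v a)
    fun a => Real.rpow_nonneg (empiricalDist_nonneg v a) (((d : ℝ) - 1) / d))
  congr 1
  refine prod_congr rfl fun a _ => ?_
  rw [← Real.rpow_natCast, ← Real.rpow_natCast, ← Real.rpow_mul (empiricalDist_nonneg v a)]
  congr 1
  push_cast [Nat.cast_sub (Nat.one_le_iff_ne_zero.2 hd)]
  field_simp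

lemma zeroSumPartition_nonneg {ν : G → ℝ} (hν : ∀ a, 0 ≤ ν a) : 0 ≤ zeroSumPartition d ν :=
  sum_nonneg fun _ _ => prod_nonneg fun _ _ => Real.rpow_nonneg (hν _) _

lemma card_mul_prod_factorial_mul_rowWordCount_le [NeZero n] (hd : d ≠ 0) (v : Fin n → G) :
    (#{w : Fin n → G | fiberCard w = fiberCard v} : ℝ)
        * ((∏ a, ((d * fiberCard v a)! : ℝ))
          * rowWordCount n (fun u : Fin d → G => ∑ i, u i = 0) fun a => d * fiberCard v a)
      ≤ (3 * (n * d + 1)) ^ Fintype.card G * (n * d)!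
        * zeroSumPartition d (empiricalDist v) ^ n := by
  have factorials := prod_factorial_mul_fiberCard_le hd v
  have words := rowWordCount_mul_prod_empiricalDist_pow_le hd v
  have vectors := card_fiberCard_eq_mul_prod_pow_le v
  have split : ∏ a, empiricalDist v a ^ (d * fiberCard v a)
      = (∏ a, empiricalDist v a ^ ((d - 1) * fiberCard v a))
        * ∏ a, empiricalDist v a ^ fiberCard v a := by
    rw [← prod_mul_distrib]
    refine prod_congr rfl fun a _ => ?_
    rw [← pow_add, ← Nat.succ_mul, Nat.succ_eq_add_one,
      Nat.sub_add_cancel (Nat.one_le_iff_ne_zero.2 hd)]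
  have pos : 0 < ∏ a, empiricalDist v a ^ (d * fiberCard v a) :=
    prod_pos fun a _ => empiricalDist_pow_pos v a d
  rw [split] at factorials pos
  have nonneg (k : ℕ) : 0 ≤ ∏ a, empiricalDist v a ^ (k * fiberCard v a) :=
    prod_nonneg fun a _ => (empiricalDist_pow_pos v a k).le
  have nonneg_one := nonneg 1
  have nonneg_sub := nonneg (d - 1)
  simp only [one_mul] at nonneg_one
  refine le_of_mul_le_mul_right ?_ pos
  set A := ∏ a, empiricalDist v a ^ ((d - 1) * fiberCard v a)
  set B := ∏ a, empiricalDist v a ^ fiberCard v a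
  have := zeroSumPartition_nonneg (d := d) (empiricalDist_nonneg v)
  have key := mul_le_mul factorials (mul_le_mul vectors words (by positivity) zero_le_one)
    (by positivity) (by positivity)
  linarith

/-- The method of types: there are only polynomially many types. -/
lemma sum_annihilatorCount_le_of_zeroSumPartition_le [NeZero n] (hd : d ≠ 0) {γ : ℝ}
    {S : Finset (Fin n → G)} (hS : ∀ v ∈ S, zeroSumPartition d (empiricalDist v) ≤ 1 - γ) :
    ∑ v ∈ S, (annihilatorCount d v : ℝ)
      ≤ (n + 1) ^ Fintype.card G
        * ((3 * (n * d + 1)) ^ Fintype.card G * Real.exp (-γ * n)) * (n * d)! := by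
  set B : (G → ℕ) → ℝ := fun t => (∏ a, ((d * t a)! : ℝ))
    * rowWordCount n (fun u : Fin d → G => ∑ i, u i = 0) fun a => d * t a with hB
  have count_le (v : Fin n → G) : (annihilatorCount d v : ℝ) ≤ B (fiberCard v) := by
    simp only [hB]
    exact_mod_cast annihilatorCount_le_prod_factorial_mul_rowWordCount d v
  have type_le : ∀ t ∈ S.image fiberCard, #{v ∈ S | fiberCard v = t} • B t
      ≤ (3 * (n * d + 1)) ^ Fintype.card G * (n * d)! * Real.exp (-γ * n) := by
    rintro t ht
    obtain ⟨v, hv, rfl⟩ := mem_image.1 ht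
    have partition_le : zeroSumPartition d (empiricalDist v) ^ n ≤ Real.exp (-γ * n) := by
      rw [mul_comm, Real.exp_nat_mul]
      gcongr
      · exact zeroSumPartition_nonneg (empiricalDist_nonneg v)
      · linarith [hS v hv, Real.add_one_le_exp (-γ)]
    have card_le : #{w ∈ S | fiberCard w = fiberCard v}
        ≤ #{w : Fin n → G | fiberCard w = fiberCard v} :=
      card_le_card (filter_subset_filter _ (subset_univ _))
    calc #{w ∈ S | fiberCard w = fiberCard v} • B (fiberCard v)
        ≤ #{w : Fin n → G | fiberCard w = fiberCard v} * B (fiberCard v) := by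
          rw [nsmul_eq_mul]
          gcongr
      _ ≤ _ := card_mul_prod_factorial_mul_rowWordCount_le hd v
      _ ≤ _ := by gcongr
  calc ∑ v ∈ S, (annihilatorCount d v : ℝ) ≤ ∑ v ∈ S, B (fiberCard v) :=
        sum_le_sum fun v _ => count_le v
    _ = ∑ t ∈ S.image fiberCard, #{v ∈ S | fiberCard v = t} • B t := sum_comp B fiberCard
    _ ≤ #(S.image fiberCard) • _ := sum_le_card_nsmul _ _ _ type_le
    _ ≤ ((n + 1) ^ Fintype.card G : ℕ) • _ := by gcongr; exact card_image_fiberCard_le S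
    _ = _ := by
        rw [nsmul_eq_mul]
        push_cast
        ring

end Types

/-! ### Coincidence of types -/

section SignMoment

variable {κ : Type*} [Fintype κ] [DecidableEq κ] {ν : κ → ℝ}

/-- The `L`-th absolute moment of the random signed sum `∑ a, ± ν a`. -/
noncomputable def signMoment (ν : κ → ℝ) (L : ℕ) : ℝ :=
  (1 / 2) ^ Fintype.card κ * ∑ ε : κ → ℤˣ, |∑ a, ((ε a : ℤ) : ℝ) * ν a| ^ L

lemma signMoment_nonneg (ν : κ → ℝ) (L : ℕ) : 0 ≤ signMoment ν L := by
  unfold signMoment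
  positivity

lemma sum_prod_sign (f : κ → ℤˣ → ℝ) :
    ∑ ε : κ → ℤˣ, ∏ a, f a (ε a) = ∏ a, (f a 1 + f a (-1)) := by
  rw [← Fintype.piFinset_univ, ← prod_univ_sum]
  exact prod_congr rfl fun a _ => sum_pair (by decide)

lemma abs_sign (u : ℤˣ) : |((u : ℤ) : ℝ)| = 1 := by
  rcases Int.units_eq_one_or u with rfl | rfl <;> simp

lemma sum_prod_sign_pow_mul_sum_pow (ν : κ → ℝ) (L : ℕ) (q : κ → ℕ) :
    ∑ ε : κ → ℤˣ, (∏ a, ((ε a : ℤ) : ℝ) ^ q a) * (∑ a, ((ε a : ℤ) : ℝ) * ν a) ^ L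
      = ∑ l ∈ piAntidiag univ L, (Nat.multinomial univ l * ∏ a, ν a ^ l a)
          * ∏ a, (1 + (-1 : ℝ) ^ (l a + q a)) := by
  simp only [sum_pow_eq_sum_piAntidiag, mul_sum]
  rw [sum_comm]
  refine sum_congr rfl fun l _ => ?_
  have signs := sum_prod_sign fun a u => ((u : ℤ) : ℝ) ^ (l a + q a)
  simp only [Units.val_one, Int.cast_one, one_pow, Units.val_neg, Int.cast_neg] at signs
  rw [← signs, mul_sum]
  refine sum_congr rfl fun ε _ => ?_
  simp only [mul_pow, pow_add, prod_mul_distrib]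
  ring

-- The left side is the probability that all multiplicities in `L` samples from `ν` have the same
-- parity as `q`, which is a Fourier coefficient on `{±1} ^ κ`.
lemma sum_multinomial_of_parity_le (hν : ∀ a, 0 ≤ ν a) (L : ℕ) (q : κ → ℕ) :
    ∑ l ∈ piAntidiag univ L with ∀ a, Even (l a + q a),
      (Nat.multinomial univ l : ℝ) * ∏ a, ν a ^ l a ≤ signMoment ν L := by
  have term_nonneg (l : κ → ℕ) : 0 ≤ (Nat.multinomial univ l : ℝ) * ∏ a, ν a ^ l a :=
    mul_nonneg (Nat.cast_nonneg _) (prod_nonneg fun a _ => pow_nonneg (hν a) _)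
  have even_terms : (∑ l ∈ piAntidiag univ L with ∀ a, Even (l a + q a),
      (Nat.multinomial univ l : ℝ) * ∏ a, ν a ^ l a) * 2 ^ Fintype.card κ
      ≤ ∑ l ∈ piAntidiag univ L, (Nat.multinomial univ l * ∏ a, ν a ^ l a)
          * ∏ a, (1 + (-1 : ℝ) ^ (l a + q a)) := by
    rw [sum_filter, sum_mul]
    refine sum_le_sum fun l _ => ?_
    split_ifs with even
    · simp only [(even _).neg_one_pow, one_add_one_eq_two, prod_const, card_univ, le_refl]
    · rw [zero_mul]
      refine mul_nonneg (term_nonneg l) (prod_nonneg fun a _ => ?_)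
      rcases neg_one_pow_eq_or ℝ (l a + q a) with h | h <;> rw [h] <;> norm_num
  rw [← sum_prod_sign_pow_mul_sum_pow] at even_terms
  rw [signMoment, one_div, inv_pow, inv_mul_eq_div, le_div_iff₀ (by positivity)]
  refine even_terms.trans (sum_le_sum fun ε _ => (le_abs_self _).trans_eq ?_)
  simp only [abs_mul, abs_prod, abs_pow, abs_sign, one_pow, prod_const_one, one_mul]

lemma signMoment_add_le (hν : ν ∈ stdSimplex ℝ κ) (L M : ℕ) :
    signMoment ν (L + M) ≤ signMoment ν L := by
  refine mul_le_mul_of_nonneg_left (sum_le_sum fun ε _ => ?_) (by positivity)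
  refine pow_le_pow_of_le_one (abs_nonneg _) ?_ (Nat.le_add_right L M)
  refine (abs_sum_le_sum_abs _ _).trans_eq ?_
  simp only [abs_mul, abs_sign, one_mul, abs_of_nonneg (hν.1 _), hν.2]

lemma abs_pow_le_exp_add_exp (s : ℝ) (k : ℕ) :
    |s| ^ k ≤ Real.exp (k * (s - 1)) + Real.exp (k * (-s - 1)) := by
  have key : |s| ^ k ≤ Real.exp (k * (|s| - 1)) := by
    rw [Real.exp_nat_mul]
    gcongr
    linarith [Real.add_one_le_exp (|s| - 1)]
  refine key.trans ?_
  rcases abs_choice s with h | h <;> rw [h]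
  · exact le_add_of_nonneg_right (Real.exp_pos _).le
  · exact le_add_of_nonneg_left (Real.exp_pos _).le

lemma signMoment_two_mul_le (hν : ν ∈ stdSimplex ℝ κ) (r : ℕ) :
    signMoment ν (2 * r)
      ≤ (1 / 2) ^ Fintype.card κ * (2 * ∏ a, (1 + Real.exp (-(4 * r * ν a)))) := by
  refine mul_le_mul_of_nonneg_left ?_ (by positivity)
  have exp_sum (ε : κ → ℤˣ) (c : ℝ) :
      Real.exp ((2 * r : ℕ) * (c * ∑ a, ((ε a : ℤ) : ℝ) * ν a - 1))
        = ∏ a, Real.exp (2 * r * ν a * (c * ((ε a : ℤ) : ℝ) - 1)) := by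
    rw [← Real.exp_sum]
    conv_lhs => rw [← hν.2, mul_sum, ← sum_sub_distrib, mul_sum]
    push_cast
    exact congrArg _ (sum_congr rfl fun a _ => by ring)
  calc ∑ ε : κ → ℤˣ, |∑ a, ((ε a : ℤ) : ℝ) * ν a| ^ (2 * r)
      ≤ ∑ ε : κ → ℤˣ, ((∏ a, Real.exp (2 * r * ν a * (1 * ((ε a : ℤ) : ℝ) - 1)))
          + ∏ a, Real.exp (2 * r * ν a * (-1 * ((ε a : ℤ) : ℝ) - 1))) := by
        refine sum_le_sum fun ε _ => ?_
        rw [← exp_sum, ← exp_sum, one_mul, neg_one_mul]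
        exact abs_pow_le_exp_add_exp _ _
    _ = 2 * ∏ a, (1 + Real.exp (-(4 * r * ν a))) := by
        rw [sum_add_distrib, two_mul (∏ a, _),
          sum_prod_sign fun a u => Real.exp (2 * r * ν a * (1 * ((u : ℤ) : ℝ) - 1)),
          sum_prod_sign fun a u => Real.exp (2 * r * ν a * (-1 * ((u : ℤ) : ℝ) - 1))]
        congr 1 <;> refine prod_congr rfl fun a _ => ?_
        · norm_num
          ring_nf
        · rw [add_comm]
          norm_num
          ring_nf

end SignMoment

section BalancedProb

/-- The probability that `2 * m` tosses of a fair coin are balanced. -/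
noncomputable def balancedProb (m : ℕ) : ℝ := m.centralBinom / 4 ^ m

lemma balancedProb_pos (m : ℕ) : 0 < balancedProb m := by
  have := m.centralBinom_pos
  unfold balancedProb
  positivity

lemma balancedProb_eq (m : ℕ) : balancedProb m = (2 * m)! / (4 ^ m * (m ! : ℝ) ^ 2) := by
  rw [balancedProb, Nat.centralBinom_eq_two_mul_choose, Nat.cast_choose ℝ (by lia),
    show 2 * m - m = m by lia, div_div, sq, mul_comm (_ * _)]

lemma balancedProb_sq_mul_wallis (m : ℕ) :
    balancedProb m ^ 2 * ((2 * m + 1) * Real.Wallis.W m) = 1 := by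
  have : (2 : ℝ) ^ (4 * m) = (4 ^ m) ^ 2 := by
    rw [← pow_mul, show (4 : ℝ) = 2 ^ 2 by norm_num, ← pow_mul]
    congr 1
    ring
  rw [Real.Wallis.W_eq_factorial_ratio, balancedProb_eq, this]
  field_simp

lemma one_div_balancedProb_sq_le (m : ℕ) :
    1 / balancedProb m ^ 2 ≤ (2 * m + 1) * (Real.pi / 2) := by
  have pos := balancedProb_pos m
  rw [div_le_iff₀ (by positivity), mul_comm]
  refine (balancedProb_sq_mul_wallis m).ge.trans ?_
  gcongr
  exact Real.Wallis.W_le m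

lemma balancedProb_sq_le (m : ℕ) :
    balancedProb m ^ 2 ≤ 2 / Real.pi * ((2 * m + 2) / (2 * m + 1) ^ 2) := by
  have key : balancedProb m ^ 2 * ((2 * m + 1) * (((2 : ℝ) * m + 1) / (2 * m + 2) * (Real.pi / 2)))
      ≤ 1 := by
    refine le_trans ?_ (balancedProb_sq_mul_wallis m).le
    gcongr
    exact Real.Wallis.le_W m
  rw [← le_div_iff₀ (by positivity)] at key
  exact key.trans_eq (by field_simp)

-- The shape of this bound lets the right side be absorbed into longer multinomials.
lemma balancedProb_sq_div_factorial_le (m : ℕ) :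
    balancedProb m ^ 2 / (2 * m)!
      ≤ 2 / Real.pi * (1 / ((2 * m + 1)! : ℝ) + 2 / ((2 * m + 2)! : ℝ)) := by
  have split : ((2 : ℝ) * m + 2) / (2 * m + 1) ^ 2
      ≤ 1 / (2 * m + 1) + 2 / ((2 * m + 1) * (2 * m + 2)) := by
    rw [div_add_div _ _ (by positivity) (by positivity),
      div_le_div_iff₀ (by positivity) (by positivity)]
    have : (0 : ℝ) ≤ m := m.cast_nonneg
    have : 0 ≤ ((2 : ℝ) * m + 1) ^ 2 * m := by positivity
    have : 0 ≤ ((2 : ℝ) * m + 1) ^ 2 * m * m := by positivity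
    nlinarith
  rw [div_le_iff₀ (by positivity)]
  refine (balancedProb_sq_le m).trans
    ((mul_le_mul_of_nonneg_left split (by positivity)).trans_eq ?_)
  rw [Nat.factorial_succ (2 * m + 1), Nat.factorial_succ (2 * m)]
  push_cast
  field_simp
  ring

lemma multinomial_eq_div {κ : Type*} [Fintype κ] (μ : κ → ℕ) :
    (Nat.multinomial univ μ : ℝ) = (∑ a, μ a)! / ∏ a, ((μ a)! : ℝ) := by
  rw [eq_div_iff (by positivity), mul_comm]
  exact_mod_cast Nat.multinomial_spec univ μ

lemma multinomial_sq_mul_balancedProb {κ : Type*} [Fintype κ] (μ : κ → ℕ) {r : ℕ}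
    (hμ : ∑ a, μ a = r) :
    (Nat.multinomial univ μ : ℝ) ^ 2 * balancedProb r
      = (2 * r)! * ∏ a, (balancedProb (μ a) / (2 * μ a)!) := by
  have factor (a : κ) : balancedProb (μ a) / (2 * μ a)! = 1 / (4 ^ μ a * ((μ a)! : ℝ) ^ 2) := by
    rw [balancedProb_eq]
    field_simp
  simp only [factor]
  simp only [prod_div_distrib, prod_const_one, prod_mul_distrib, prod_pow_eq_pow_sum, prod_pow, hμ,
    multinomial_eq_div, balancedProb_eq]
  field_simp

end BalancedProb

section TypeCollision

variable {κ : Type*} [Fintype κ] [DecidableEq κ] {ν : κ → ℝ}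

/-- The probability that two independent words of `r` independent letters with distribution `ν` have
the same type. -/
noncomputable def typeCollision (ν : κ → ℝ) (r : ℕ) : ℝ :=
  ∑ μ ∈ piAntidiag univ r, (Nat.multinomial univ μ : ℝ) ^ 2 * ∏ a, ν a ^ (2 * μ a)

lemma sum_factorial_mul_prod_pow_div_factorial_le (hν : ∀ a, 0 ≤ ν a) (r : ℕ) (c : κ → ℕ) :
    ∑ μ ∈ piAntidiag univ r, ((2 * r + ∑ a, c a)! : ℝ)
        * ∏ a, (ν a ^ (2 * μ a + c a) / (2 * μ a + c a)!)
      ≤ signMoment ν (2 * r + ∑ a, c a) := by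
  refine le_trans ?_ (sum_multinomial_of_parity_le hν _ c)
  let e : (κ → ℕ) → κ → ℕ := fun μ a => 2 * μ a + c a
  have total {μ : κ → ℕ} (hμ : μ ∈ piAntidiag (univ : Finset κ) r) :
      ∑ a, e μ a = 2 * r + ∑ a, c a := by
    rw [sum_add_distrib, ← mul_sum, (mem_piAntidiag.1 hμ).1]
  have inj : e.Injective := fun μ μ' h => by
    funext a
    have : 2 * μ a + c a = 2 * μ' a + c a := congrFun h a
    lia
  have sub : (piAntidiag (univ : Finset κ) r).image e
      ⊆ {l ∈ piAntidiag (univ : Finset κ) (2 * r + ∑ a, c a) | ∀ a, Even (l a + c a)} := by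
    intro l hl
    obtain ⟨μ, hμ, rfl⟩ := mem_image.1 hl
    exact mem_filter.2 ⟨mem_piAntidiag.2 ⟨total hμ, by simp⟩, fun a => ⟨μ a + c a, by ring⟩⟩
  calc _ = ∑ l ∈ (piAntidiag univ r).image e, (Nat.multinomial univ l : ℝ) * ∏ a, ν a ^ l a := by
        rw [sum_image inj.injOn]
        refine sum_congr rfl fun μ hμ => ?_
        rw [multinomial_eq_div, total hμ, prod_div_distrib]
        ring
    _ ≤ _ := sum_le_sum_of_subset_of_nonneg sub fun l _ _ =>
        mul_nonneg (Nat.cast_nonneg _) (prod_nonneg fun a _ => pow_nonneg (hν a) _)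

lemma sum_factorial_mul_prod_pow_mul_pow_le (hν : ν ∈ stdSimplex ℝ κ) (r : ℕ) (c : κ → ℕ) :
    ∑ μ ∈ piAntidiag univ r,
        ((2 * r)! : ℝ) * ∏ a, (ν a ^ (2 * μ a) * (2 * r * ν a) ^ c a / (2 * μ a + c a)!)
      ≤ signMoment ν (2 * r) := by
  refine le_trans (sum_le_sum fun μ _ => ?_)
    ((sum_factorial_mul_prod_pow_div_factorial_le hν.1 r c).trans (signMoment_add_le hν _ _))
  have factorial_le : ((2 * r)! : ℝ) * (2 * r) ^ ∑ a, c a ≤ (2 * r + ∑ a, c a)! := by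
    have : (2 * r)! * (2 * r) ^ ∑ a, c a ≤ (2 * r + ∑ a, c a)! :=
      (Nat.mul_le_mul_left _ (Nat.pow_le_pow_left (Nat.le_succ _) _)).trans
        Nat.factorial_mul_pow_le_factorial
    exact_mod_cast this
  calc ((2 * r)! : ℝ) * ∏ a, (ν a ^ (2 * μ a) * (2 * r * ν a) ^ c a / (2 * μ a + c a)!)
      = (2 * r)! * (2 * r) ^ (∑ a, c a) * ∏ a, (ν a ^ (2 * μ a + c a) / (2 * μ a + c a)!) := by
        rw [mul_assoc, ← prod_pow_eq_pow_sum, ← prod_mul_distrib]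
        congr 1
        refine prod_congr rfl fun a _ => ?_
        ring
    _ ≤ _ := mul_le_mul_of_nonneg_right factorial_le
        (prod_nonneg fun a _ => div_nonneg (pow_nonneg (hν.1 a) _) (Nat.cast_nonneg _))

lemma sum_factorial_mul_prod_balancedProb_sq_le (hν : ν ∈ stdSimplex ℝ κ) (hpos : ∀ a, 0 < ν a)
    {r : ℕ} (hr : r ≠ 0) :
    ∑ μ ∈ piAntidiag univ r,
        ((2 * r)! : ℝ) * ∏ a, (ν a ^ (2 * μ a) * (balancedProb (μ a) ^ 2 / (2 * μ a)!))
      ≤ (∏ a, (1 / (Real.pi * r * ν a) * (1 + 1 / (r * ν a)))) * signMoment ν (2 * r) := by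
  let w : κ → ℕ → ℝ := fun a k => 2 / Real.pi * k / (2 * r * ν a) ^ k
  have w_nonneg (a : κ) (k : ℕ) : 0 ≤ w a k := by
    have := hpos a
    positivity
  have letter_le (a : κ) (m : ℕ) : ν a ^ (2 * m) * (balancedProb m ^ 2 / (2 * m)!)
      ≤ ∑ k ∈ {1, 2}, w a k * (ν a ^ (2 * m) * (2 * r * ν a) ^ k / (2 * m + k)!) := by
    have := hpos a
    refine (mul_le_mul_of_nonneg_left (balancedProb_sq_div_factorial_le m)
      (by positivity)).trans_eq ?_
    rw [sum_pair (by norm_num)]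
    simp only [w]
    push_cast
    field_simp
  calc _ ≤ ∑ μ ∈ piAntidiag univ r, ((2 * r)! : ℝ) * ∏ a, ∑ k ∈ {1, 2},
          w a k * (ν a ^ (2 * μ a) * (2 * r * ν a) ^ k / (2 * μ a + k)!) := by
        gcongr with μ _ a _
        · exact fun a _ => by have := hpos a; positivity
        · exact letter_le a (μ a)
    _ = ∑ c ∈ Fintype.piFinset fun _ : κ => ({1, 2} : Finset ℕ), (∏ a, w a (c a))
          * ∑ μ ∈ piAntidiag univ r,
            ((2 * r)! : ℝ) * ∏ a, (ν a ^ (2 * μ a) * (2 * r * ν a) ^ c a / (2 * μ a + c a)!) := by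
        simp only [prod_univ_sum, mul_sum, prod_mul_distrib]
        rw [sum_comm]
        exact sum_congr rfl fun c _ => sum_congr rfl fun μ _ => by ring
    _ ≤ ∑ c ∈ Fintype.piFinset fun _ : κ => ({1, 2} : Finset ℕ), (∏ a, w a (c a))
          * signMoment ν (2 * r) := by
        gcongr with c
        · exact prod_nonneg fun a _ => w_nonneg a _
        · exact sum_factorial_mul_prod_pow_mul_pow_le hν r c
    _ = _ := by
        rw [← sum_mul, ← prod_univ_sum]
        congr 1
        refine prod_congr rfl fun a _ => ?_
        have := (hpos a).ne'
        rw [sum_pair (by norm_num)]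
        simp only [w]
        push_cast
        field_simp

/-- Cauchy-Schwarz, after writing the square of a multinomial coefficient as a multinomial
coefficient of twice the type times probabilities of balanced coin tosses. -/
lemma typeCollision_sq_le (hν : ν ∈ stdSimplex ℝ κ) (hpos : ∀ a, 0 < ν a) {r : ℕ} (hr : r ≠ 0) :
    typeCollision ν r ^ 2 ≤ (Real.pi / 2) * (2 * r + 1) * signMoment ν (2 * r) ^ 2
      * ∏ a, (1 / (Real.pi * r * ν a) * (1 + 1 / (r * ν a))) := by
  let F (g : ℕ → ℝ) (μ : κ → ℕ) : ℝ :=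
    ((2 * r)! : ℝ) * ∏ a, (ν a ^ (2 * μ a) * (g (μ a) / (2 * μ a)!))
  have F_nonneg {g : ℕ → ℝ} (hg : ∀ m, 0 ≤ g m) (μ : κ → ℕ) : 0 ≤ F g μ :=
    mul_nonneg (Nat.cast_nonneg _) (prod_nonneg fun a _ => mul_nonneg (pow_nonneg (hν.1 a) _)
      (div_nonneg (hg _) (Nat.cast_nonneg _)))
  have collision_eq : typeCollision ν r * balancedProb r
      = ∑ μ ∈ piAntidiag univ r, F balancedProb μ := by
    rw [typeCollision, sum_mul]
    refine sum_congr rfl fun μ hμ => ?_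
    rw [mul_right_comm, multinomial_sq_mul_balancedProb μ (mem_piAntidiag.1 hμ).1, mul_assoc,
      mul_comm (∏ a, _), ← prod_mul_distrib]
  have first : ∑ μ ∈ piAntidiag univ r, F (fun _ => 1) μ ≤ signMoment ν (2 * r) := by
    simpa [F, div_eq_mul_inv] using sum_factorial_mul_prod_pow_mul_pow_le hν r fun _ => 0
  have second := sum_factorial_mul_prod_balancedProb_sq_le hν hpos hr
  have cauchy_schwarz : (∑ μ ∈ piAntidiag univ r, F balancedProb μ) ^ 2
      ≤ (∑ μ ∈ piAntidiag univ r, F (fun _ => 1) μ)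
        * ∑ μ ∈ piAntidiag univ r, F (fun m => balancedProb m ^ 2) μ := by
    refine sum_sq_le_sum_mul_sum_of_sq_le_mul _ (fun μ _ => F_nonneg (fun _ => zero_le_one) μ)
      (fun μ _ => F_nonneg (fun m => sq_nonneg _) μ) fun μ _ => ?_
    simp only [F, mul_pow, ← prod_pow]
    rw [mul_mul_mul_comm, ← sq, ← prod_mul_distrib]
    exact (congrArg _ (prod_congr rfl fun a _ => by ring)).le
  have mass_le := cauchy_schwarz.trans (mul_le_mul first second
    (sum_nonneg fun μ _ => F_nonneg (fun m => sq_nonneg _) μ) (signMoment_nonneg _ _))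
  rw [← collision_eq, mul_pow] at mass_le
  have pos := balancedProb_pos r
  calc typeCollision ν r ^ 2
      = typeCollision ν r ^ 2 * balancedProb r ^ 2 * (1 / balancedProb r ^ 2) := by field_simp
    _ ≤ (signMoment ν (2 * r)
          * ((∏ a, (1 / (Real.pi * r * ν a) * (1 + 1 / (r * ν a)))) * signMoment ν (2 * r)))
        * ((2 * r + 1) * (Real.pi / 2)) :=
        mul_le_mul mass_le (one_div_balancedProb_sq_le r) (by positivity)
          ((by positivity : (0 : ℝ) ≤ _).trans mass_le)
    _ = _ := by ring

end TypeCollision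

/-! ### Averaging over phases -/

section Twist

variable {κ : Type*} {M : ℕ} [NeZero M]

/-- The weights `z` with the letter `a` rotated by the phase `exp (2πi θ a / M)`. Averaging over
`θ` extracts coefficients of polynomials in the weights. -/
noncomputable def twist (z : κ → ℂ) (θ : κ → ZMod M) (a : κ) : ℂ := z a * ZMod.stdAddChar (θ a)

lemma norm_twist (z : κ → ℂ) (θ : κ → ZMod M) (a : κ) : ‖twist z θ a‖ = ‖z a‖ := by
  rw [twist, norm_mul, AddChar.norm_apply, mul_one]

variable [Fintype κ] [DecidableEq κ]

lemma sum_stdAddChar_pow_mul_conj_pow {k l : ℕ} (hk : k < M) (hl : l < M) :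
    ∑ x : ZMod M, ZMod.stdAddChar x ^ k * conj (ZMod.stdAddChar x ^ l)
      = if k = l then (M : ℂ) else 0 := by
  have cast_eq : (k - l : ZMod M) = 0 ↔ k = l := by
    rw [sub_eq_zero]
    refine ⟨fun h => ?_, congrArg _⟩
    simpa [ZMod.val_cast_of_lt hk, ZMod.val_cast_of_lt hl, -ZMod.val_natCast]
      using congrArg ZMod.val h
  have combine (x : ZMod M) : ZMod.stdAddChar x ^ k * conj (ZMod.stdAddChar x ^ l)
      = ZMod.stdAddChar (x * (k - l : ZMod M)) := by
    rw [← AddChar.map_nsmul_eq_pow, ← AddChar.map_nsmul_eq_pow, ← AddChar.map_neg_eq_conj,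
      ← AddChar.map_add_eq_mul]
    congr 1
    simp only [nsmul_eq_mul]
    ring
  simp only [combine, AddChar.sum_mulShift _ (ZMod.isPrimitive_stdAddChar M), cast_eq, ZMod.card,
    Nat.cast_ite, Nat.cast_zero]

lemma sum_prod_stdAddChar_pow_mul_conj {k l : κ → ℕ} (hk : ∀ a, k a < M) (hl : ∀ a, l a < M) :
    ∑ θ : κ → ZMod M,
        (∏ a, ZMod.stdAddChar (θ a) ^ k a) * conj (∏ a, ZMod.stdAddChar (θ a) ^ l a)
      = if k = l then (M : ℂ) ^ Fintype.card κ else 0 := by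
  simp only [map_prod, ← prod_mul_distrib]
  rw [← Fintype.piFinset_univ, ← prod_univ_sum (fun _ => univ)
    fun a x => ZMod.stdAddChar x ^ k a * conj (ZMod.stdAddChar x ^ l a)]
  simp only [sum_stdAddChar_pow_mul_conj_pow (hk _) (hl _)]
  split_ifs with h
  · simp [h]
  · obtain ⟨a, ha⟩ := Function.ne_iff.1 h
    exact prod_eq_zero (mem_univ a) (if_neg ha)

lemma sum_norm_sq_sum_mul_prod_stdAddChar_pow {S : Finset (κ → ℕ)} (hS : ∀ k ∈ S, ∀ a, k a < M)
    (c : (κ → ℕ) → ℂ) :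
    ∑ θ : κ → ZMod M, ‖∑ k ∈ S, c k * ∏ a, ZMod.stdAddChar (θ a) ^ k a‖ ^ 2
      = (M : ℝ) ^ Fintype.card κ * ∑ k ∈ S, ‖c k‖ ^ 2 := by
  have expand (θ : κ → ZMod M) :
      (‖∑ k ∈ S, c k * ∏ a, ZMod.stdAddChar (θ a) ^ k a‖ ^ 2 : ℂ)
        = ∑ k ∈ S, ∑ l ∈ S, c k * conj (c l)
          * ((∏ a, ZMod.stdAddChar (θ a) ^ k a) * conj (∏ a, ZMod.stdAddChar (θ a) ^ l a)) := by
    rw [← Complex.mul_conj', map_sum, sum_mul_sum]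
    simp only [map_mul, mul_mul_mul_comm]
  rw [← Complex.ofReal_inj]
  push_cast
  simp only [expand]
  rw [sum_comm, mul_sum]
  refine sum_congr rfl fun k hk => ?_
  rw [sum_comm, sum_congr rfl fun l hl => by
    rw [← mul_sum, sum_prod_stdAddChar_pow_mul_conj (hS k hk) (hS l hl)]]
  simp [hk, Complex.mul_conj', mul_comm]

lemma sum_norm_sum_twist_pow {r : ℕ} (hr : r < M) (z : κ → ℂ) :
    ∑ θ : κ → ZMod M, ‖∑ a, twist z θ a‖ ^ (2 * r)
      = (M : ℝ) ^ Fintype.card κ * typeCollision (fun a => ‖z a‖) r := by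
  have lt_modulus {k : κ → ℕ} (hk : k ∈ piAntidiag univ r) (a : κ) : k a < M :=
    ((single_le_sum (fun _ _ => Nat.zero_le _) (mem_univ a)).trans_eq
      (mem_piAntidiag.1 hk).1).trans_lt hr
  have expand (θ : κ → ZMod M) : (∑ a, twist z θ a) ^ r
      = ∑ k ∈ piAntidiag univ r, (Nat.multinomial univ k * ∏ a, z a ^ k a)
        * ∏ a, ZMod.stdAddChar (θ a) ^ k a := by
    simp only [sum_pow_eq_sum_piAntidiag, twist, mul_pow, prod_mul_distrib, mul_assoc]
  simp only [pow_mul', ← norm_pow _ r, expand]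
  rw [sum_norm_sq_sum_mul_prod_stdAddChar_pow fun k => lt_modulus, typeCollision]
  simp only [norm_mul, norm_prod, norm_pow, Complex.norm_natCast, mul_pow, ← prod_pow,
    ← pow_mul, mul_comm]

lemma rowWordCount_mul_prod_pow_eq {n d : ℕ} (hM : n * d < M) (r : (Fin d → κ) → Prop)
    [DecidablePred r] {m : κ → ℕ} (hm : ∀ a, m a < M) (z : κ → ℂ) :
    (M : ℂ) ^ Fintype.card κ * (rowWordCount n r m * ∏ a, z a ^ m a)
      = ∑ θ : κ → ZMod M, (∑ u with r u, ∏ i, twist z θ (u i)) ^ n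
        * conj (∏ a, ZMod.stdAddChar (θ a) ^ m a) := by
  have fiberCard_lt (w : Fin n × Fin d → κ) (a : κ) : fiberCard w a < M :=
    (card_le_univ _).trans_lt (by simpa using hM)
  simp only [← sum_prod_rows, sum_mul]
  rw [sum_comm]
  have extract (w : Fin n × Fin d → κ) :
      ∑ θ : κ → ZMod M, (∏ x, twist z θ (w x)) * conj (∏ a, ZMod.stdAddChar (θ a) ^ m a)
        = if fiberCard w = m then (M : ℂ) ^ Fintype.card κ * ∏ a, z a ^ m a else 0 := by
    simp only [prod_comp_eq_prod_pow_fiberCard w (twist z _)]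
    simp only [twist, mul_pow, prod_mul_distrib, mul_assoc]
    rw [← mul_sum, sum_prod_stdAddChar_pow_mul_conj (fiberCard_lt w) hm]
    split_ifs with h
    · rw [h, mul_comm]
    · rw [mul_zero]
  rw [sum_congr rfl fun w _ => extract w, ← sum_filter, filter_filter, sum_const, nsmul_eq_mul,
    rowWordCount]
  ring

lemma card_pow_mul_rowWordCount_mul_prod_pow_le {G : Type*} [AddCommGroup G] [Fintype G]
    [DecidableEq G] {n d : ℕ} (hM : n * d < M) {m : G → ℕ} (hm : ∀ a, m a < M) (z : G → ℂ) :
    (M : ℝ) ^ Fintype.card G * ((Fintype.card G : ℝ) ^ n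
        * (rowWordCount n (fun u : Fin d → G => ∑ i, u i = 0) m * ∏ a, ‖z a‖ ^ m a))
      ≤ ∑ θ : G → ZMod M, (∑ ψ, ‖charTransform (twist z θ) ψ‖ ^ d) ^ n := by
  have row_le (θ : G → ZMod M) :
      Fintype.card G * ‖∑ u : Fin d → G with ∑ i, u i = 0, ∏ i, twist z θ (u i)‖
        ≤ ∑ ψ, ‖charTransform (twist z θ) ψ‖ ^ d := by
    rw [← Complex.norm_natCast, ← norm_mul, card_mul_sum_sum_eq_zero fun _ => twist z θ]
    exact (norm_sum_le _ _).trans_eq (by simp)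
  have extract := congrArg norm
    (rowWordCount_mul_prod_pow_eq hM (fun u : Fin d → G => ∑ i, u i = 0) hm z)
  simp only [norm_mul, norm_pow, norm_prod, Complex.norm_natCast] at extract
  rw [mul_left_comm, extract]
  refine (mul_le_mul_of_nonneg_left (norm_sum_le _ _) (by positivity)).trans ?_
  rw [mul_sum]
  refine sum_le_sum fun θ _ => ?_
  simp only [norm_mul, norm_pow, norm_prod, RCLike.norm_conj, AddChar.norm_apply, one_pow,
    prod_const_one, mul_one, ← mul_pow]
  exact pow_le_pow_left₀ (by positivity) (row_le θ) n

end Twist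

section PowerSums

variable {κ : Type*} {x : κ → ℝ}

lemma sum_pow_le_mul_sqrt (hx : ∀ k, 0 ≤ x k) (hx1 : ∀ k, x k ≤ 1) {d : ℕ} (hd : 3 ≤ d)
    (s : Finset κ) : ∑ k ∈ s, x k ^ d ≤ (∑ k ∈ s, x k ^ 2) * √(∑ k ∈ s, x k ^ 2) := by
  rw [sum_mul]
  refine sum_le_sum fun k hk => ?_
  calc x k ^ d ≤ x k ^ 3 := pow_le_pow_of_le_one (hx k) (hx1 k) hd
    _ = x k ^ 2 * x k := pow_succ _ _
    _ ≤ x k ^ 2 * √(∑ k ∈ s, x k ^ 2) := by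
        gcongr
        exact Real.le_sqrt_of_sq_le
          (single_le_sum (f := fun j => x j ^ 2) (fun _ _ => sq_nonneg _) hk)

lemma add_mul_sqrt_add_le {a b : ℝ} (ha : 0 ≤ a) (hb : 0 ≤ b) :
    (a + b) * √(a + b) ≤ 3 * (a * √a + b * √b) := by
  wlog hab : a ≤ b generalizing a b
  · simpa only [add_comm] using this hb ha (le_of_not_ge hab)
  have sqrt_two_le : √2 ≤ 3 / 2 := (Real.sqrt_le_left (by norm_num)).2 (by norm_num)
  have : 0 ≤ a * √a := by positivity
  calc (a + b) * √(a + b) ≤ (2 * b) * √(2 * b) := by gcongr <;> linarith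
    _ = 2 * √2 * (b * √b) := by rw [Real.sqrt_mul zero_le_two]; ring
    _ ≤ 3 * (b * √b) := by gcongr; linarith
    _ ≤ _ := by linarith

lemma half_le_pow_of_one_sub_le_sq {x p : ℝ} {d : ℕ} (hx : 0 ≤ x) (hx1 : x ≤ 1) (hp : 1 ≤ p)
    (hdp : d ≤ p) (h : 1 - 1 / (36 * p ^ 2) ≤ x ^ 2) : 1 / 2 ≤ x ^ d := by
  have : 0 < p := one_pos.trans_le hp
  have base : 1 + -(1 / (36 * p ^ 2)) ≤ x := by nlinarith
  have inv_le : 1 / (36 * p ^ 2) ≤ 1 := by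
    rw [div_le_one (by positivity)]
    nlinarith
  calc (1 : ℝ) / 2 ≤ 1 + p * -(1 / (36 * p ^ 2)) := by
        have : p * (1 / (36 * p ^ 2)) = 1 / (36 * p) := by field_simp
        have : 1 / (36 * p) ≤ 1 / 2 := one_div_le_one_div_of_le two_pos (by linarith)
        linarith
    _ ≤ 1 + d * -(1 / (36 * p ^ 2)) := by
        have : d * (1 / (36 * p ^ 2)) ≤ p * (1 / (36 * p ^ 2)) := by gcongr
        linarith
    _ ≤ (1 + -(1 / (36 * p ^ 2))) ^ d := one_add_mul_le_pow (by linarith) d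
    _ ≤ x ^ d := pow_le_pow_left₀ (by linarith) base d

variable [Fintype κ] {n d r m : ℕ} {p η : ℝ}

/-- One coordinate carries almost all of the mass: the others contribute a second order term. -/
lemma sum_pow_le_pow_mul_exp (hx : ∀ k, 0 ≤ x k) (hx1 : ∀ k, x k ≤ 1) (hd : 3 ≤ d) (hdp : d ≤ p)
    (hη : 0 ≤ η) (hsum : ∑ k, x k ^ 2 ≤ 1 + η) {k : κ} (hk : 1 - 1 / (36 * p ^ 2) ≤ x k ^ 2) :
    ∑ j, x j ^ d ≤ x k ^ d * Real.exp ((1 - x k ^ 2) / p + 6 * (η * √η)) := by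
  classical
  have hp : 1 ≤ p := by
    have : (3 : ℝ) ≤ d := mod_cast hd
    linarith
  have : 0 < p := one_pos.trans_le hp
  set s := 1 - x k ^ 2
  have hs0 : 0 ≤ s := sub_nonneg.2 (pow_le_one₀ (hx k) (hx1 k))
  have sqrt_le : √s ≤ 1 / (6 * p) := by
    rw [Real.sqrt_le_left (by positivity), div_pow, mul_pow, one_pow]
    linarith
  have rest_sq_le : ∑ j ∈ univ.erase k, x j ^ 2 ≤ s + η := by
    have := add_sum_erase univ (fun j => x j ^ 2) (mem_univ k)
    linarith
  have rest_le : ∑ j ∈ univ.erase k, x j ^ d ≤ s / (2 * p) + 3 * (η * √η) := by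
    calc _ ≤ _ := sum_pow_le_mul_sqrt hx hx1 hd _
      _ ≤ (s + η) * √(s + η) := by gcongr
      _ ≤ 3 * (s * √s + η * √η) := add_mul_sqrt_add_le hs0 hη
      _ ≤ 3 * (s * (1 / (6 * p)) + η * √η) := by gcongr
      _ = _ := by field_simp; ring
  have half_le := half_le_pow_of_one_sub_le_sq (hx k) (hx1 k) hp hdp hk
  have : 0 ≤ s / p + 6 * (η * √η) := by positivity
  calc ∑ j, x j ^ d = x k ^ d + ∑ j ∈ univ.erase k, x j ^ d :=
        (add_sum_erase univ _ (mem_univ k)).symm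
    _ ≤ x k ^ d + (s / p + 6 * (η * √η)) * (1 / 2) := by
        have : s / (2 * p) = s / p * (1 / 2) := by field_simp
        linarith
    _ ≤ x k ^ d + (s / p + 6 * (η * √η)) * x k ^ d := by gcongr
    _ = x k ^ d * (s / p + 6 * (η * √η) + 1) := by ring
    _ ≤ _ := by
        gcongr
        exact Real.add_one_le_exp _

lemma pow_mul_exp_pow_le {x : ℝ} (hx : 0 ≤ x) (hx1 : x ≤ 1) (hp : 0 < p) (hm : n ≤ p * m)
    (hr : 2 * r + 2 * m ≤ n * d) (hη : 6 * n * (η * √η) ≤ 1) :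
    (x ^ d * Real.exp ((1 - x ^ 2) / p + 6 * (η * √η))) ^ n ≤ Real.exp 1 * x ^ (2 * r) := by
  have hs0 : 0 ≤ 1 - x ^ 2 := sub_nonneg.2 (pow_le_one₀ hx hx1)
  have exponent_le : n * ((1 - x ^ 2) / p + 6 * (η * √η)) ≤ m * (1 - x ^ 2) + 1 := by
    have : n * ((1 - x ^ 2) / p) ≤ m * (1 - x ^ 2) := by
      rw [mul_div_assoc', div_le_iff₀ hp]
      calc n * (1 - x ^ 2) ≤ p * m * (1 - x ^ 2) := by gcongr
        _ = _ := by ring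
    linarith
  have absorb : x ^ (2 * m) * Real.exp (m * (1 - x ^ 2)) ≤ 1 := by
    have sq_mul_le : x ^ 2 * Real.exp (1 - x ^ 2) ≤ 1 := by
      have := Real.add_one_le_exp (x ^ 2 - 1)
      rw [← neg_sub, Real.exp_neg, ← div_eq_mul_inv, div_le_one (Real.exp_pos _)]
      linarith
    rw [pow_mul, Real.exp_nat_mul, ← mul_pow]
    exact pow_le_one₀ (by positivity) sq_mul_le
  calc (x ^ d * Real.exp ((1 - x ^ 2) / p + 6 * (η * √η))) ^ n
      = x ^ (n * d) * Real.exp (n * ((1 - x ^ 2) / p + 6 * (η * √η))) := by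
        rw [mul_pow, ← pow_mul, mul_comm d, Real.exp_nat_mul]
    _ ≤ x ^ (2 * r + 2 * m) * Real.exp (m * (1 - x ^ 2) + 1) :=
        mul_le_mul (pow_le_pow_of_le_one hx hx1 hr) (Real.exp_le_exp.2 exponent_le)
          (Real.exp_pos _).le (by positivity)
    _ = Real.exp 1 * x ^ (2 * r) * (x ^ (2 * m) * Real.exp (m * (1 - x ^ 2))) := by
        rw [pow_add, Real.exp_add]
        ring
    _ ≤ Real.exp 1 * x ^ (2 * r) * 1 := by gcongr
    _ = _ := mul_one _

lemma sum_pow_le_exp_neg (hx : ∀ k, 0 ≤ x k) (hx1 : ∀ k, x k ≤ 1) (hd : 3 ≤ d) (hp : 1 ≤ p)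
    (hsum : ∑ k, x k ^ 2 ≤ 1 + η) (hη : 144 * p ^ 2 * η ≤ 1)
    (hflat : ∀ k, x k ^ 2 ≤ 1 - 1 / (36 * p ^ 2)) :
    ∑ k, x k ^ d ≤ Real.exp (-(1 / (144 * p ^ 2))) := by
  have : 0 < p := one_pos.trans_le hp
  set c := 1 / (144 * p ^ 2) with hc
  have hc0 : 0 < c := by positivity
  have hc1 : c ≤ 1 / 144 := one_div_le_one_div_of_le (by norm_num) (by nlinarith)
  have inv_eq : 1 / (36 * p ^ 2) = 4 * c := by rw [hc]; field_simp; norm_num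
  have hηc : η ≤ c := by
    rw [hc, le_div_iff₀ (by positivity)]
    linarith
  have pow_le (k : κ) : x k ^ d ≤ x k ^ 2 * (1 - 2 * c) := by
    have le_one_sub : x k ≤ 1 - 2 * c := by
      refine le_of_sq_le_sq ((hflat k).trans ?_) (by linarith)
      rw [inv_eq]
      nlinarith
    calc x k ^ d ≤ x k ^ 3 := pow_le_pow_of_le_one (hx k) (hx1 k) hd
      _ = x k ^ 2 * x k := pow_succ _ _
      _ ≤ _ := by gcongr
  calc ∑ k, x k ^ d ≤ ∑ k, x k ^ 2 * (1 - 2 * c) := sum_le_sum fun k _ => pow_le k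
    _ ≤ (1 + η) * (1 - 2 * c) := by
        rw [← sum_mul]
        exact mul_le_mul_of_nonneg_right hsum (by linarith)
    _ ≤ -c + 1 := by nlinarith
    _ ≤ _ := Real.add_one_le_exp _

lemma sum_pow_pow_le (hx : ∀ k, 0 ≤ x k) (hx1 : ∀ k, x k ≤ 1) (hd : 3 ≤ d) (hdp : d ≤ p)
    (hm : n ≤ p * m) (hr : 2 * r + 2 * m ≤ n * d) (hη0 : 0 ≤ η) (hsum : ∑ k, x k ^ 2 ≤ 1 + η)
    (hη : 144 * p ^ 2 * η ≤ 1) (hη' : 6 * n * (η * √η) ≤ 1) :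
    (∑ k, x k ^ d) ^ n
      ≤ Real.exp 1 * ∑ k, x k ^ (2 * r) + Real.exp (-(n / (144 * p ^ 2))) := by
  have hp : 1 ≤ p := by
    have : (3 : ℝ) ≤ d := mod_cast hd
    linarith
  have sum_nonneg' (i : ℕ) : 0 ≤ ∑ k, x k ^ i := sum_nonneg fun k _ => pow_nonneg (hx k) _
  by_cases hpeak : ∃ k, 1 - 1 / (36 * p ^ 2) ≤ x k ^ 2
  · obtain ⟨k, hk⟩ := hpeak
    calc (∑ k, x k ^ d) ^ n
        ≤ (x k ^ d * Real.exp ((1 - x k ^ 2) / p + 6 * (η * √η))) ^ n :=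
          pow_le_pow_left₀ (sum_nonneg' d) (sum_pow_le_pow_mul_exp hx hx1 hd hdp hη0 hsum hk) n
      _ ≤ Real.exp 1 * x k ^ (2 * r) :=
          pow_mul_exp_pow_le (hx k) (hx1 k) (one_pos.trans_le hp) hm hr hη'
      _ ≤ Real.exp 1 * ∑ k, x k ^ (2 * r) := by
          gcongr
          exact single_le_sum (f := fun j => x j ^ (2 * r)) (fun j _ => pow_nonneg (hx j) _)
            (mem_univ k)
      _ ≤ _ := le_add_of_nonneg_right (Real.exp_pos _).le
  · push Not at hpeak
    calc (∑ k, x k ^ d) ^ n ≤ Real.exp (-(1 / (144 * p ^ 2))) ^ n :=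
          pow_le_pow_left₀ (sum_nonneg' d)
            (sum_pow_le_exp_neg hx hx1 hd hp hsum hη fun k => (hpeak k).le) n
      _ = Real.exp (-(n / (144 * p ^ 2))) := by rw [← Real.exp_nat_mul]; ring_nf
      _ ≤ _ := le_add_of_nonneg_left (mul_nonneg (Real.exp_pos _).le (sum_nonneg' _))

end PowerSums

lemma card_pow_mul_rowWordCount_mul_prod_pow_le_typeCollision {G : Type*} [AddCommGroup G]
    [Fintype G] [DecidableEq G] {ν : G → ℝ} (hν : ν ∈ stdSimplex ℝ G) {n d r m : ℕ}
    (hd : 3 ≤ d) (hdG : d ≤ Fintype.card G) (hm : n ≤ Fintype.card G * m)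
    (hr : 2 * r + 2 * m ≤ n * d) {t : G → ℕ} (ht : ∀ a, t a ≤ n * d) {η : ℝ} (hη0 : 0 ≤ η)
    (hexcess : Fintype.card G * ∑ a, ν a ^ 2 ≤ 1 + η)
    (hη : 144 * (Fintype.card G : ℝ) ^ 2 * η ≤ 1) (hη' : 6 * n * (η * √η) ≤ 1) :
    (Fintype.card G : ℝ) ^ n
        * (rowWordCount n (fun u : Fin d → G => ∑ i, u i = 0) t * ∏ a, ν a ^ t a)
      ≤ Real.exp 1 * (Fintype.card G * typeCollision ν r)
        + Real.exp (-(n / (144 * (Fintype.card G : ℝ) ^ 2))) := by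
  set M := n * d + 1
  have norm_ofReal (a : G) : ‖(ν a : ℂ)‖ = ν a := by simp [abs_of_nonneg (hν.1 a)]
  have pointwise (θ : G → ZMod M) :
      (∑ ψ, ‖charTransform (twist (fun a => (ν a : ℂ)) θ) ψ‖ ^ d) ^ n
        ≤ Real.exp 1 * ∑ ψ, ‖charTransform (twist (fun a => (ν a : ℂ)) θ) ψ‖ ^ (2 * r)
          + Real.exp (-(n / (144 * (Fintype.card G : ℝ) ^ 2))) := by
    refine sum_pow_pow_le (fun ψ => norm_nonneg _) (fun ψ => ?_) hd (mod_cast hdG) (mod_cast hm) hr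
      hη0 ?_ hη hη'
    · refine (norm_charTransform_le _ _).trans_eq ?_
      simp only [norm_twist, norm_ofReal, hν.2]
    · simpa only [sum_norm_sq_charTransform, norm_twist, norm_ofReal] using hexcess
  have moment (ψ : AddChar G ℂ) :
      ∑ θ : G → ZMod M, ‖charTransform (twist (fun a => (ν a : ℂ)) θ) ψ‖ ^ (2 * r)
        = (M : ℝ) ^ Fintype.card G * typeCollision ν r := by
    have := sum_norm_sum_twist_pow (M := M) (by lia : r < M) fun a => ν a * ψ a
    simpa only [charTransform, twist, mul_right_comm, norm_mul, AddChar.norm_apply, mul_one,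
      norm_ofReal] using this
  have average := (card_pow_mul_rowWordCount_mul_prod_pow_le (M := M) (d := d) (lt_add_one _)
    (fun a => Nat.lt_succ_of_le (ht a)) fun a => (ν a : ℂ)).trans
    (sum_le_sum fun θ _ => pointwise θ)
  rw [sum_add_distrib, ← mul_sum, sum_comm] at average
  simp only [moment, norm_ofReal, sum_const, card_univ, nsmul_eq_mul, Fintype.card_pi, prod_const,
    ZMod.card, AddChar.card_eq, Nat.cast_pow] at average
  refine le_of_mul_le_mul_left (average.trans_eq ?_) (by positivity : 0 < (M : ℝ) ^ Fintype.card G)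
  ring

/-! ### Spread types -/

section SpreadTypes

variable {κ : Type*} [Fintype κ] {ν : κ → ℝ} {N r : ℕ}

lemma typeCollision_sq_le_prod [DecidableEq κ] (hν : ν ∈ stdSimplex ℝ κ) (hpos : ∀ a, 0 < ν a)
    (hr : r ≠ 0) :
    typeCollision ν r ^ 2 ≤ 2 * Real.pi * (2 * r + 1) *
      ∏ a, ((1 / 4) * (1 + Real.exp (-(4 * r * ν a))) ^ 2 *
        (1 / (Real.pi * r * ν a) * (1 + 1 / (r * ν a)))) := by
  have hprod : 0 ≤ ∏ a, (1 / (Real.pi * r * ν a) * (1 + 1 / (r * ν a))) :=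
    prod_nonneg fun a _ => by have := hpos a; positivity
  have hsign := signMoment_two_mul_le hν r
  have hsign0 := signMoment_nonneg ν (2 * r)
  calc typeCollision ν r ^ 2
      ≤ (Real.pi / 2) * (2 * r + 1) * signMoment ν (2 * r) ^ 2 *
          ∏ a, (1 / (Real.pi * r * ν a) * (1 + 1 / (r * ν a))) := typeCollision_sq_le hν hpos hr
    _ ≤ (Real.pi / 2) * (2 * r + 1) *
          ((1 / 2) ^ Fintype.card κ * (2 * ∏ a, (1 + Real.exp (-(4 * r * ν a))))) ^ 2 *
          ∏ a, (1 / (Real.pi * r * ν a) * (1 + 1 / (r * ν a))) := by gcongr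
    _ = _ := by
      have hquarter : (1 / 4 : ℝ) ^ Fintype.card κ = ((1 / 2) ^ Fintype.card κ) ^ 2 := by
        rw [← pow_mul, mul_comm, pow_mul]; norm_num
      simp only [prod_mul_distrib (f := fun a => (1 / 4) * (1 + Real.exp (-(4 * r * ν a))) ^ 2),
        prod_mul_distrib (f := fun _ : κ => (1 / 4 : ℝ)), prod_const, card_univ, prod_pow, hquarter]
      ring

lemma sq_prod_factorial_le (hν : ν ∈ stdSimplex ℝ κ) (hpos : ∀ a, 0 < ν a) (hN : N ≠ 0)
    {t : κ → ℕ} (ht : ∀ a, (t a : ℝ) = N * ν a) :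
    (∏ a, ((t a)! : ℝ)) ^ 2 ≤
      (∏ a, (2 * Real.pi * (N * ν a) * Real.exp (1 / (6 * (N * ν a))))) *
        ((N / Real.exp 1) ^ N * ∏ a, ν a ^ t a) ^ 2 := by
  have hsum : ∑ a, t a = N := by
    have h : ((∑ a, t a : ℕ) : ℝ) = N := by push_cast; simp only [ht, ← mul_sum, hν.2, mul_one]
    exact_mod_cast h
  have hpow : (N / Real.exp 1) ^ N * ∏ a, ν a ^ t a = ∏ a, (N * ν a / Real.exp 1) ^ t a := by
    have hfactor (a) : (N * ν a / Real.exp 1) ^ t a = (N / Real.exp 1) ^ t a * ν a ^ t a := by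
      rw [← mul_pow]; congr 1; ring
    simp only [hfactor, prod_mul_distrib, prod_pow_eq_pow_sum, hsum]
  rw [hpow, ← prod_pow, ← prod_pow, ← prod_mul_distrib]
  refine prod_le_prod (fun a _ => by positivity) fun a _ => ?_
  have hNν : 0 < N * ν a := mul_pos (by positivity) (hpos a)
  have htne : t a ≠ 0 := by rintro h; have := ht a; simp only [h, Nat.cast_zero] at this; linarith
  have hstirling := factorial_le_stirling htne
  rw [ht] at hstirling
  calc ((t a)! : ℝ) ^ 2 ≤ (√(2 * Real.pi * (N * ν a)) * (N * ν a / Real.exp 1) ^ t a *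
        Real.exp (1 / (12 * (N * ν a)))) ^ 2 := by gcongr
    _ = _ := by
      rw [mul_pow, mul_pow, Real.sq_sqrt (by positivity), ← Real.exp_nat_mul,
        show ((2 : ℕ) : ℝ) * (1 / (12 * (N * ν a))) = 1 / (6 * (N * ν a)) by
          push_cast; field_simp; norm_num]
      ring

/-- The factors `2πNx` and `1 / (πrx)` nearly cancel, up to `4`, as `2r` is close to `N`. -/
lemma stirling_mul_collision_factor_le {p x : ℝ} (hp : 0 ≤ p) (hr : r ≠ 0) (hrN : 2 * r + 1 ≤ N)
    (hx : 1 / 2 ≤ p * x) :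
    (2 * Real.pi * (N * x) * Real.exp (1 / (6 * (N * x)))) *
      ((1 / 4) * (1 + Real.exp (-(4 * r * x))) ^ 2 * (1 / (Real.pi * r * x) * (1 + 1 / (r * x))))
      ≤ Real.exp ((N - 2 * r) / (2 * r) + 4 * p / r) := by
  have hr0 : (0 : ℝ) < r := by positivity
  have hx0 : 0 < x := by
    by_contra! h
    nlinarith
  have hNr : (2 * r : ℝ) ≤ N := by exact_mod_cast (by lia : 2 * r ≤ N)
  set y := 1 / (r * x) with hy
  have hy0 : 0 < y := by positivity
  have hyp : y ≤ 2 * p / r := by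
    rw [hy, div_le_div_iff₀ (by positivity) hr0]
    nlinarith
  have hratio : (N : ℝ) / (2 * r) ≤ Real.exp ((N - 2 * r) / (2 * r)) := by
    convert Real.add_one_le_exp (((N : ℝ) - 2 * r) / (2 * r)) using 1
    field_simp
    ring
  have hdecay : Real.exp (-(4 * r * x)) ≤ y / 4 := by
    rw [Real.exp_neg, show y / 4 = (4 * r * x)⁻¹ by rw [hy]; field_simp]
    exact inv_anti₀ (by positivity) (by linarith [Real.add_one_le_exp (4 * r * x)])
  have hsign : 1 + Real.exp (-(4 * r * x)) ≤ Real.exp (y / 4) := by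
    linarith [Real.add_one_le_exp (y / 4)]
  have hstirling : 1 / (6 * (N * x)) ≤ y / 2 := by
    rw [show y / 2 = 1 / (2 * r * x) by rw [hy]; field_simp]
    exact one_div_le_one_div_of_le (by positivity) (by nlinarith)
  calc (2 * Real.pi * (N * x) * Real.exp (1 / (6 * (N * x)))) *
      ((1 / 4) * (1 + Real.exp (-(4 * r * x))) ^ 2 * (1 / (Real.pi * r * x) * (1 + y)))
      = N / (2 * r) * (1 + Real.exp (-(4 * r * x))) ^ 2 * (1 + y) *
          Real.exp (1 / (6 * (N * x))) := by field_simp; ring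
    _ ≤ Real.exp ((N - 2 * r) / (2 * r)) * Real.exp (y / 4) ^ 2 * Real.exp y *
          Real.exp (y / 2) := by
        gcongr
        linarith [Real.add_one_le_exp y]
    _ = Real.exp ((N - 2 * r) / (2 * r) + 2 * y) := by
        rw [← Real.exp_nat_mul, ← Real.exp_add, ← Real.exp_add, ← Real.exp_add]
        congr 1; push_cast; ring
    _ ≤ Real.exp ((N - 2 * r) / (2 * r) + 4 * p / r) := by
        gcongr
        linarith [show 4 * p / r = 2 * (2 * p / r) by ring]

lemma prod_stirling_mul_collision_factor_le (hr : r ≠ 0) (hrN : 2 * r + 1 ≤ N)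
    (hspread : ∀ a, 1 / 2 ≤ Fintype.card κ * ν a)
    (hgap : Fintype.card κ * (N - 2 * r : ℝ) ≤ 4 * r) (hcard : 4 * (Fintype.card κ : ℝ) ^ 2 ≤ r) :
    (∏ a, (2 * Real.pi * (N * ν a) * Real.exp (1 / (6 * (N * ν a))))) *
      ∏ a, ((1 / 4) * (1 + Real.exp (-(4 * r * ν a))) ^ 2 *
        (1 / (Real.pi * r * ν a) * (1 + 1 / (r * ν a)))) ≤ Real.exp 4 := by
  have hν0 (a) : 0 ≤ ν a := by
    by_contra! h
    nlinarith [hspread a, (Fintype.card κ).cast_nonneg (α := ℝ)]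
  have hr0 : (0 : ℝ) < r := by positivity
  rw [← prod_mul_distrib]
  refine (prod_le_prod (fun a _ => by have := hν0 a; positivity) fun a _ =>
    stirling_mul_collision_factor_le (Nat.cast_nonneg _) hr hrN (hspread a)).trans ?_
  rw [prod_const, card_univ, ← Real.exp_nat_mul]
  gcongr
  calc Fintype.card κ * (((N : ℝ) - 2 * r) / (2 * r) + 4 * Fintype.card κ / r)
      = (Fintype.card κ * ((N : ℝ) - 2 * r)) / (2 * r) + 4 * (Fintype.card κ : ℝ) ^ 2 / r := by
        field_simp
    _ ≤ 2 + 1 := by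
        gcongr
        · rw [div_le_iff₀ (by positivity)]; linarith
        · rwa [div_le_one hr0]
    _ ≤ 4 := by norm_num

lemma prod_factorial_mul_typeCollision_le [DecidableEq κ] (hν : ν ∈ stdSimplex ℝ κ)
    {t : κ → ℕ} (ht : ∀ a, (t a : ℝ) = N * ν a) (hr : r ≠ 0) (hrN : 2 * r + 1 ≤ N)
    (hspread : ∀ a, 1 / 2 ≤ Fintype.card κ * ν a)
    (hgap : Fintype.card κ * (N - 2 * r : ℝ) ≤ 4 * r) (hcard : 4 * (Fintype.card κ : ℝ) ^ 2 ≤ r) :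
    (∏ a, ((t a)! : ℝ)) * typeCollision ν r ≤ Real.exp 2 * (N ! * ∏ a, ν a ^ t a) := by
  have hpos (a) : 0 < ν a := (hν.1 a).lt_of_ne fun h => by
    have := hspread a; rw [← h] at this; norm_num at this
  have hP0 : 0 ≤ ∏ a, ν a ^ t a := prod_nonneg fun a _ => pow_nonneg (hν.1 a) _
  have hrN' : (2 * r + 1 : ℝ) ≤ N := by exact_mod_cast hrN
  set E := (N / Real.exp 1) ^ N * ∏ a, ν a ^ t a with hE
  have hstirling : √(2 * Real.pi * N) * E ≤ N ! * ∏ a, ν a ^ t a := by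
    rw [hE, ← mul_assoc]
    exact mul_le_mul_of_nonneg_right (Stirling.le_factorial_stirling N) hP0
  refine le_of_sq_le_sq ?_ (by positivity)
  have hfactor0 : 0 ≤ ∏ a, (2 * Real.pi * (N * ν a) * Real.exp (1 / (6 * (N * ν a)))) :=
    prod_nonneg fun a _ => by have := hpos a; positivity
  calc ((∏ a, ((t a)! : ℝ)) * typeCollision ν r) ^ 2
      = (∏ a, ((t a)! : ℝ)) ^ 2 * typeCollision ν r ^ 2 := mul_pow ..
    _ ≤ _ := mul_le_mul (sq_prod_factorial_le hν hpos (by lia) ht)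
        (typeCollision_sq_le_prod hν hpos hr) (sq_nonneg _) (mul_nonneg hfactor0 (sq_nonneg _))
    _ = 2 * Real.pi * (2 * r + 1) * E ^ 2 *
          ((∏ a, (2 * Real.pi * (N * ν a) * Real.exp (1 / (6 * (N * ν a))))) *
            ∏ a, ((1 / 4) * (1 + Real.exp (-(4 * r * ν a))) ^ 2 *
              (1 / (Real.pi * r * ν a) * (1 + 1 / (r * ν a))))) := by ring
    _ ≤ 2 * Real.pi * (2 * r + 1) * E ^ 2 * Real.exp 4 := by
        gcongr
        exact prod_stirling_mul_collision_factor_le hr hrN hspread hgap hcard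
    _ ≤ 2 * Real.pi * N * E ^ 2 * Real.exp 4 := by gcongr
    _ = Real.exp 4 * (√(2 * Real.pi * N) * E) ^ 2 := by
        rw [mul_pow √_, Real.sq_sqrt (by positivity)]; ring
    _ ≤ Real.exp 4 * (N ! * ∏ a, ν a ^ t a) ^ 2 := by gcongr
    _ = (Real.exp 2 * (N ! * ∏ a, ν a ^ t a)) ^ 2 := by
        rw [mul_pow (Real.exp 2), ← Real.exp_nat_mul]; norm_num

end SpreadTypes

lemma prod_factorial_mul_exp_neg_le {κ : Type*} [Fintype κ] [DecidableEq κ] {n d : ℕ} [NeZero n]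
    (hd : d ≠ 0) {c : ℝ} (hc : (3 * ((n : ℝ) * d + 1)) ^ Fintype.card κ ≤ Real.exp c)
    (v : Fin n → κ) :
    (∏ a, ((d * fiberCard v a)! : ℝ)) * Real.exp (-c)
      ≤ (n * d)! * ∏ a, empiricalDist v a ^ (d * fiberCard v a) := by
  have : 0 ≤ ∏ a, empiricalDist v a ^ (d * fiberCard v a) :=
    prod_nonneg fun a _ => (empiricalDist_pow_pos v a d).le
  rw [Real.exp_neg, ← div_eq_mul_inv, div_le_iff₀ (Real.exp_pos _), mul_comm (_ * ∏ _, _)]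
  refine (prod_factorial_mul_fiberCard_le hd v).trans ?_
  rw [mul_assoc]
  gcongr

section BulkVectors

variable {G : Type*} [AddCommGroup G] [Fintype G] [DecidableEq G] {n d r m : ℕ}

lemma card_pow_mul_annihilatorCount_le [NeZero n] (hd : 3 ≤ d) (hdG : d ≤ Fintype.card G)
    (hm : n ≤ Fintype.card G * m) (hr : 2 * r + 2 * m ≤ n * d) (hr0 : r ≠ 0)
    (hgap : Fintype.card G * ((n * d : ℕ) - 2 * r : ℝ) ≤ 4 * r)
    (hcard : 4 * (Fintype.card G : ℝ) ^ 2 ≤ r)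
    (hpoly : (3 * ((n : ℝ) * d + 1)) ^ Fintype.card G
      ≤ Real.exp (n / (144 * (Fintype.card G : ℝ) ^ 2)))
    {v : Fin n → G} (hspread : ∀ a, 1 / 2 ≤ Fintype.card G * empiricalDist v a)
    {η : ℝ} (hη0 : 0 ≤ η) (hexcess : Fintype.card G * ∑ a, empiricalDist v a ^ 2 ≤ 1 + η)
    (hη : 144 * (Fintype.card G : ℝ) ^ 2 * η ≤ 1) (hη' : 6 * n * (η * √η) ≤ 1) :
    (Fintype.card G : ℝ) ^ n * annihilatorCount d v
      ≤ (Real.exp 3 + 1) * Fintype.card G * (n * d)! := by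
  set ν := empiricalDist v with hνv
  set W := rowWordCount n (fun u : Fin d → G => ∑ i, u i = 0) fun a => d * fiberCard v a
  set A := ∏ a, ((d * fiberCard v a)! : ℝ)
  set Q := ∏ a, ν a ^ (d * fiberCard v a)
  have hν : ν ∈ stdSimplex ℝ G := empiricalDist_mem_stdSimplex v
  have hn : 0 < n := NeZero.pos n
  have hm0 : 0 < m := Nat.pos_of_ne_zero fun h => by simp [h] at hm; lia
  have hQ : 0 < Q := prod_pos fun a _ => empiricalDist_pow_pos v a d
  have hcount : (annihilatorCount d v : ℝ) ≤ A * W := by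
    simp only [A, W, ← Nat.cast_prod, ← Nat.cast_mul, Nat.cast_le]
    exact annihilatorCount_le_prod_factorial_mul_rowWordCount d v
  have hwords : (Fintype.card G : ℝ) ^ n * (W * Q)
      ≤ Real.exp 1 * (Fintype.card G * typeCollision ν r)
        + Real.exp (-(n / (144 * (Fintype.card G : ℝ) ^ 2))) :=
    card_pow_mul_rowWordCount_mul_prod_pow_le_typeCollision hν hd hdG hm hr
      (fun a => (Nat.mul_le_mul_left d (fiberCard_le_card v a)).trans_eq
        (by rw [Fintype.card_fin, mul_comm])) hη0 hexcess hη hη'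
  have hmain : A * typeCollision ν r ≤ Real.exp 2 * ((n * d)! * Q) :=
    prod_factorial_mul_typeCollision_le hν (fun a => by
      rw [hνv, empiricalDist, Fintype.card_fin]; push_cast; field_simp) hr0 (by lia)
      hspread hgap hcard
  have herror : A * Real.exp (-(n / (144 * (Fintype.card G : ℝ) ^ 2)))
      ≤ Fintype.card G * ((n * d)! * Q) :=
    (prod_factorial_mul_exp_neg_le (by lia) hpoly v).trans (le_mul_of_one_le_left (by positivity)
      (Nat.one_le_cast.2 (Fintype.card_pos (α := G))))
  refine le_of_mul_le_mul_right ?_ hQ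
  calc (Fintype.card G : ℝ) ^ n * annihilatorCount d v * Q
      ≤ (Fintype.card G : ℝ) ^ n * (A * W) * Q := by gcongr
    _ = A * ((Fintype.card G : ℝ) ^ n * (W * Q)) := by ring
    _ ≤ A * (Real.exp 1 * (Fintype.card G * typeCollision ν r)
          + Real.exp (-(n / (144 * (Fintype.card G : ℝ) ^ 2)))) := by gcongr
    _ = Real.exp 1 * Fintype.card G * (A * typeCollision ν r)
          + A * Real.exp (-(n / (144 * (Fintype.card G : ℝ) ^ 2))) := by ring
    _ ≤ Real.exp 1 * Fintype.card G * (Real.exp 2 * ((n * d)! * Q))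
          + Fintype.card G * ((n * d)! * Q) := by gcongr
    _ = (Real.exp 3 + 1) * Fintype.card G * (n * d)! * Q := by
        rw [show (3 : ℝ) = 1 + 2 by norm_num, Real.exp_add]; ring

end BulkVectors

/-! ### Arithmetic obstructions -/

section Obstructions

variable {R : Type*} [Semiring R] [NoZeroDivisors R] [DecidableEq R] {n d : ℕ}

lemma sum_eq_zero_of_annihilatorCount_ne_zero (hd : (d : R) ≠ 0) {v : Fin n → R}
    (hv : annihilatorCount d v ≠ 0) : ∑ i, v i = 0 := by
  obtain ⟨P, hP⟩ := card_ne_zero.1 hv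
  have hrow := (mem_filter.1 hP).2
  have htotal : d * ∑ i, v i = 0 := by
    calc d * ∑ i, v i = ∑ x : Fin n × Fin d, v x.1 := by simp [Fintype.sum_prod_type, mul_sum]
      _ = ∑ x, v (P x).1 := (Equiv.sum_comp P fun x => v x.1).symm
      _ = 0 := by simp [Fintype.sum_prod_type, hrow]
  exact (mul_eq_zero.1 htotal).resolve_left hd

/-- Too few entries differ from `b` to meet every row, so some row sum is `d * b`. -/
lemma annihilatorCount_eq_zero_of_mul_hammingDist_lt (hd : (d : R) ≠ 0) {v : Fin n → R} {b : R}
    (hb : b ≠ 0) (hv : d * hammingDist v (fun _ => b) < n) : annihilatorCount d v = 0 := by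
  by_contra hne
  obtain ⟨P, hP⟩ := card_ne_zero.1 hne
  have hrow := (mem_filter.1 hP).2
  have hhit (k) : ∃ i, v (P (k, i)).1 ≠ b := by
    by_contra! hk
    have := hrow k
    simp [hk, hd, hb] at this
  choose i hi using hhit
  refine hv.not_ge ?_
  calc n = #(univ : Finset (Fin n)) := (card_fin n).symm
    _ ≤ #(({j | v j ≠ b} : Finset (Fin n)) ×ˢ (univ : Finset (Fin d))) :=
        card_le_card_of_injOn (fun k => P (k, i k)) (fun k _ => by simp [hi])
          fun k _ l _ h => congrArg Prod.fst (P.injective h)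
    _ = d * hammingDist v (fun _ => b) := by
        rw [card_product, card_fin, mul_comm, hammingDist]

end Obstructions

lemma hammingDist_const_eq {ι κ : Type*} [Fintype ι] [Nonempty ι] [DecidableEq κ] (w : ι → κ)
    (b : κ) : (hammingDist w (fun _ => b) : ℝ) = Fintype.card ι * (1 - empiricalDist w b) := by
  have h : fiberCard w b + hammingDist w (fun _ => b) = Fintype.card ι :=
    card_filter_add_card_filter_not (s := univ) _
  rw [empiricalDist, mul_sub, mul_one, mul_div_cancel₀ _ (by simp), ← h]
  push_cast
  ring

lemma card_sum_eq_zero_mul_card {ι G : Type*} [Fintype ι] [Nonempty ι] [DecidableEq ι]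
    [AddCommGroup G] [Fintype G] [DecidableEq G] :
    #{v : ι → G | ∑ i, v i = 0} * Fintype.card G = Fintype.card G ^ Fintype.card ι := by
  let S : (ι → G) →+ G := ∑ i, Pi.evalAddMonoidHom (fun _ => G) i
  have hS (v) : S v = ∑ i, v i := by simp [S]
  have hsurj (g : G) : g ∈ Set.range S := ⟨Pi.single (Classical.arbitrary ι) g, by simp [hS]⟩
  have hfib (g : G) : #{v | S v = g} = #{v | S v = 0} :=
    AddMonoidHom.card_fiber_eq_of_mem_range S (hsurj g) (hsurj 0)
  calc #{v : ι → G | ∑ i, v i = 0} * Fintype.card G = ∑ g, #{v | S v = g} := by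
        simp_rw [hfib, hS, sum_const, card_univ, smul_eq_mul, mul_comm]
    _ = Fintype.card G ^ Fintype.card ι := by
        rw [← card_eq_sum_card_fiberwise fun _ _ => mem_coe.2 (mem_univ _), card_univ,
          Fintype.card_fun]

/-! ### Classification of annihilated vectors -/

lemma one_le_mul_one_sub_empiricalDist {R : Type*} [Semiring R] [NoZeroDivisors R] [DecidableEq R]
    {n d : ℕ} [NeZero n] (hd : (d : R) ≠ 0) {v : Fin n → R} (hv : annihilatorCount d v ≠ 0)
    {b : R} (hb : b ≠ 0) : 1 ≤ d * (1 - empiricalDist v b) := by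
  have hfar : n ≤ d * hammingDist v (fun _ => b) := by
    by_contra! h
    exact hv (annihilatorCount_eq_zero_of_mul_hammingDist_lt hd hb h)
  have hn : (0 : ℝ) < n := Nat.cast_pos.2 (NeZero.pos n)
  have hfar' : (n : ℝ) ≤ d * (n * (1 - empiricalDist v b)) := by
    have h := hammingDist_const_eq v b
    rw [Fintype.card_fin] at h
    rw [← h]
    exact_mod_cast hfar
  nlinarith

lemma zeroSumPartition_le_or_hammingNorm_le_or_uniformDefect_le {p d n : ℕ} [Fact p.Prime]
    [NeZero n] (hd : 3 ≤ d) (hdp : d < p) {v : Fin n → ZMod p} (hv : annihilatorCount d v ≠ 0)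
    {γ : ℝ} (hγ : 2048 * d * p ^ 2 * γ ≤ 1) :
    zeroSumPartition d (empiricalDist v) ≤ 1 - γ ∨ hammingNorm v ≤ 8 * γ * n ∨
      uniformDefect (empiricalDist v) ≤ 2 * γ := by
  have hν := empiricalDist_mem_stdSimplex v
  set ν := empiricalDist v
  refine or_iff_not_imp_left.2 fun hgap => ?_
  rw [not_le] at hgap
  rcases le_or_gt (63 / 64) (ν 0) with hconc | hconc
  · left
    have h : (hammingNorm v : ℝ) = Fintype.card (Fin n) * (1 - ν 0) := hammingDist_const_eq v 0
    rw [Fintype.card_fin] at h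
    rw [h, mul_comm]
    gcongr
    linarith [one_sub_apply_zero_le hd hν hconc]
  · right
    have hd0 : (3 : ℝ) ≤ d := by exact_mod_cast hd
    have hdF : (d : ZMod p) ≠ 0 := by
      rw [Ne, ZMod.natCast_eq_zero_iff]
      exact Nat.not_dvd_of_pos_of_lt (by lia) hdp
    have hspread (a) : ν a ≤ 1 - 1 / (64 * d) := by
      rw [le_sub_comm, div_le_iff₀ (by positivity)]
      rcases eq_or_ne a 0 with rfl | ha
      · nlinarith
      · linarith [one_le_mul_one_sub_empiricalDist hdF hv ha]
    refine (uniformDefect_le_of_spread hd hν (by positivity) hspread ?_).trans (by linarith)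
    rw [le_div_iff₀ (by positivity)]
    calc 32 * (p : ℝ) ^ 2 * (1 - zeroSumPartition d ν) * (64 * d)
        ≤ 32 * (p : ℝ) ^ 2 * γ * (64 * d) := by gcongr; linarith
      _ ≤ 1 := by linarith

lemma exists_halved_moment {n d p : ℕ} (hd : 3 ≤ d) (hp : 3 ≤ p) (hpn : 4 * p ^ 2 ≤ n) :
    ∃ r m : ℕ, n ≤ p * m ∧ 2 * r + 2 * m ≤ n * d ∧ n ≤ r ∧
      p * ((n * d : ℕ) - 2 * r : ℝ) ≤ 4 * r := by
  have hn : 36 ≤ n := by nlinarith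
  have hmul := Nat.div_add_mod n p
  have hmod := Nat.mod_lt n (by lia : p > 0)
  have hthird : n / p ≤ n / 3 := Nat.div_le_div_left hp (by norm_num)
  have hnd : 3 * n ≤ n * d := by nlinarith
  obtain ⟨m, hm⟩ : ∃ m, m = n / p + 1 := ⟨_, rfl⟩
  obtain ⟨r, hr⟩ : ∃ r, r = n * d / 2 - m := ⟨_, rfl⟩
  have hnr : n ≤ r := by lia
  refine ⟨r, m, by rw [hm, mul_add]; lia, by lia, hnr, ?_⟩
  have hpm : p * m ≤ n + p := by rw [hm, mul_add]; lia
  have hle : n * d ≤ 2 * r + (2 * m + 1) := by lia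
  have h : p * (n * d) ≤ p * (2 * r) + 4 * r := by
    calc p * (n * d) ≤ p * (2 * r) + (2 * (p * m) + p) := by nlinarith
      _ ≤ p * (2 * r) + 4 * r := by nlinarith
  have h' : (p : ℝ) * (n * d : ℕ) ≤ p * (2 * r) + 4 * r := by exact_mod_cast h
  linarith

lemma card_pow_mul_annihilatorCount_le_of_uniformDefect_le {G : Type*} [AddCommGroup G]
    [Fintype G] [DecidableEq G] {n d : ℕ} [NeZero n] (hd : 3 ≤ d) (hdG : d ≤ Fintype.card G) {γ : ℝ}
    (hγ : 3024 * (Fintype.card G : ℝ) ^ 2 * γ ≤ 1) (hγn : 333396 * γ ^ 3 * n ^ 2 ≤ 1)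
    (hpoly : (3 * ((n : ℝ) * d + 1)) ^ Fintype.card G ≤ Real.exp (γ * n)) {v : Fin n → G}
    (hv : uniformDefect (empiricalDist v) ≤ 2 * γ) :
    (Fintype.card G : ℝ) ^ n * annihilatorCount d v
      ≤ (Real.exp 3 + 1) * Fintype.card G * (n * d)! := by
  have hn : (0 : ℝ) < n := Nat.cast_pos.2 (NeZero.pos n)
  have hν := empiricalDist_mem_stdSimplex v
  set p := Fintype.card G
  have hp : (3 : ℝ) ≤ p := by exact_mod_cast hd.trans hdG
  have hpγ : p ≤ γ * n := by
    rw [← Real.exp_le_exp]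
    refine le_trans ?_ hpoly
    rw [← mul_one (p : ℝ), Real.exp_nat_mul]
    gcongr
    nlinarith [Real.exp_one_lt_d9, Nat.cast_nonneg (α := ℝ) d]
  have hγ0 : 0 < γ := pos_of_mul_pos_left (lt_of_lt_of_le (by linarith) hpγ) hn.le
  have hcube : 3024 * (p : ℝ) ^ 2 * p ≤ n := by nlinarith
  have hsq : 4 * p ^ 2 ≤ n := by
    have h : 4 * (p : ℝ) ^ 2 ≤ n := by nlinarith
    exact_mod_cast h
  obtain ⟨r, m, hm, hr, hnr, hgap⟩ := exists_halved_moment hd (hd.trans hdG) hsq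
  have hsmall : 32 * p * uniformDefect (empiricalDist v) ≤ 1 := by nlinarith
  have hexcess := card_mul_sum_sq_sub_one_le hν hsmall
  refine card_pow_mul_annihilatorCount_le (η := 21 * γ) hd hdG hm hr
    ((NeZero.pos n).trans_le hnr).ne' hgap (by exact_mod_cast hsq.trans hnr) (hpoly.trans ?_)
    (half_le_card_mul_of_uniformDefect_le hν hsmall) (by positivity) (by linarith) (by linarith) ?_
  · gcongr
    rw [le_div_iff₀ (by positivity)]
    nlinarith
  · refine le_of_sq_le_sq ?_ zero_le_one
    rw [mul_pow, mul_pow (21 * γ), Real.sq_sqrt (by positivity)]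
    linarith

lemma sum_le_of_sum_eq_zero {ι G : Type*} [Fintype ι] [Nonempty ι] [AddCommGroup G] [Fintype G]
    {S : Finset (ι → G)} {f : (ι → G) → ℝ} {C : ℝ} (hC : 0 ≤ C) (hS : ∀ v ∈ S, ∑ i, v i = 0)
    (hf : ∀ v ∈ S, (Fintype.card G : ℝ) ^ Fintype.card ι * f v ≤ C * Fintype.card G) :
    ∑ v ∈ S, f v ≤ C := by
  classical
  have hcard : (#S : ℝ) * Fintype.card G ≤ (Fintype.card G : ℝ) ^ Fintype.card ι := by
    have h : #S * Fintype.card G ≤ Fintype.card G ^ Fintype.card ι := by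
      rw [← card_sum_eq_zero_mul_card]
      gcongr
      exact fun v hv => by simpa using hS v hv
    exact_mod_cast h
  refine le_of_mul_le_mul_left ?_ (by positivity : 0 < (Fintype.card G : ℝ) ^ Fintype.card ι)
  calc (Fintype.card G : ℝ) ^ Fintype.card ι * ∑ v ∈ S, f v
      ≤ #S * (C * Fintype.card G) := by
        rw [mul_sum, ← nsmul_eq_mul]
        exact sum_le_card_nsmul _ _ _ hf
    _ = #S * Fintype.card G * C := by ring
    _ ≤ (Fintype.card G : ℝ) ^ Fintype.card ι * C := by gcongr

lemma sum_annihilatorCount_uniformDefect_le {R : Type*} [Ring R] [NoZeroDivisors R] [Fintype R]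
    [DecidableEq R] {n d : ℕ} [NeZero n] (hd : 3 ≤ d) (hdR : d ≤ Fintype.card R)
    (hd0 : (d : R) ≠ 0) {γ : ℝ} (hγ : 3024 * (Fintype.card R : ℝ) ^ 2 * γ ≤ 1)
    (hγn : 333396 * γ ^ 3 * n ^ 2 ≤ 1)
    (hpoly : (3 * ((n : ℝ) * d + 1)) ^ Fintype.card R ≤ Real.exp (γ * n)) :
    ∑ v : Fin n → R with uniformDefect (empiricalDist v) ≤ 2 * γ, (annihilatorCount d v : ℝ)
      ≤ (Real.exp 3 + 1) * (n * d)! := by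
  rw [← sum_filter_ne_zero]
  refine sum_le_of_sum_eq_zero (by positivity) (fun v hv => ?_) fun v hv => ?_
  · exact sum_eq_zero_of_annihilatorCount_ne_zero hd0 (by simpa using (mem_filter.1 hv).2)
  · rw [Fintype.card_fin, mul_right_comm]
    exact card_pow_mul_annihilatorCount_le_of_uniformDefect_le hd hdR hγ hγn hpoly
      (mem_filter.1 (mem_filter.1 hv).1).2

/-! ### Choice of the prime -/

/-- A constant `B` for which `B p² γ ≤ 1` makes every smallness condition on the gap `γ` in the
classification of annihilated vectors over `ZMod p` hold. -/
noncomputable def gapConst (d : ℕ) : ℝ :=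
  6000000 + 2048 * d + 32 * Real.exp (1 + 2 ^ d) ^ 2

lemma sum_annihilatorCount_ne_zero_le_add {p d n : ℕ} [Fact p.Prime] [NeZero n] (hd : 3 ≤ d)
    (hdp : d < p) {γ : ℝ} (hγ : 2048 * d * p ^ 2 * γ ≤ 1) :
    ∑ v : Fin n → ZMod p with v ≠ 0, (annihilatorCount d v : ℝ)
      ≤ ∑ v : Fin n → ZMod p with zeroSumPartition d (empiricalDist v) ≤ 1 - γ,
          (annihilatorCount d v : ℝ)
        + ∑ v : Fin n → ZMod p with v ≠ 0 ∧ hammingNorm v ≤ 8 * γ * n, (annihilatorCount d v : ℝ)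
        + ∑ v : Fin n → ZMod p with uniformDefect (empiricalDist v) ≤ 2 * γ,
          (annihilatorCount d v : ℝ) := by
  simp only [sum_filter, ← sum_add_distrib]
  refine sum_le_sum fun v _ => ?_
  by_cases hv : annihilatorCount d v = 0
  · simp [hv]
  have hclass := zeroSumPartition_le_or_hammingNorm_le_or_uniformDefect_le hd hdp hv hγ
  split_ifs <;> first | linarith [Nat.cast_nonneg (α := ℝ) (annihilatorCount d v)] | tauto

lemma sum_annihilatorCount_ne_zero_le {p d n : ℕ} [Fact p.Prime] [NeZero n] (hd : 3 ≤ d)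
    (hdp : d < p) {γ : ℝ} (hγ0 : 0 ≤ γ) (hγ : gapConst d * (p ^ 2 * γ) ≤ 1)
    (hγn : 333396 * γ ^ 3 * n ^ 2 ≤ 1)
    (hpoly : ((n + 1) * (3 * ((n : ℝ) * d + 1))) ^ p ≤ Real.exp (γ * n)) :
    ∑ v : Fin n → ZMod p with v ≠ 0, (annihilatorCount d v : ℝ)
      ≤ (Real.exp 3 + 3) * (n * d)! := by
  have hcard : Fintype.card (ZMod p) = p := ZMod.card p
  have hpγ : 0 ≤ p ^ 2 * γ := by positivity
  have hE : 0 ≤ Real.exp (1 + 2 ^ d) ^ 2 * (p ^ 2 * γ) := by positivity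
  have hdγ : 0 ≤ d * (p ^ 2 * γ) := by positivity
  rw [gapConst] at hγ
  have hsparse : ∑ v : Fin n → ZMod p with v ≠ 0 ∧ hammingNorm v ≤ 8 * γ * n,
      (annihilatorCount d v : ℝ) ≤ (n * d)! := by
    refine sum_annihilatorCount_sparse_le hd n (le_of_sq_le_sq ?_ (by norm_num))
    rw [hcard, mul_pow, mul_pow, Real.sq_sqrt (by positivity)]
    linarith
  have hgap : ∑ v : Fin n → ZMod p with zeroSumPartition d (empiricalDist v) ≤ 1 - γ,
      (annihilatorCount d v : ℝ) ≤ (n * d)! := by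
    refine (sum_annihilatorCount_le_of_zeroSumPartition_le (by lia)
      fun v hv => (mem_filter.1 hv).2).trans (mul_le_of_le_one_left (by positivity) ?_)
    rw [hcard, ← mul_assoc, ← mul_pow, neg_mul, Real.exp_neg]
    exact mul_inv_le_one_of_le₀ hpoly (by positivity)
  have huniform : ∑ v : Fin n → ZMod p with uniformDefect (empiricalDist v) ≤ 2 * γ,
      (annihilatorCount d v : ℝ) ≤ (Real.exp 3 + 1) * (n * d)! := by
    refine sum_annihilatorCount_uniformDefect_le hd (by lia) ?_ ?_ hγn ?_
    · rw [Ne, ZMod.natCast_eq_zero_iff]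
      exact Nat.not_dvd_of_pos_of_lt (by lia) hdp
    · rw [hcard]
      linarith
    · rw [hcard]
      exact hpoly.trans' (pow_le_pow_left₀ (by positivity) (le_mul_of_one_le_left (by positivity)
        (le_add_of_nonneg_left (by positivity))) _)
  linarith [sum_annihilatorCount_ne_zero_le_add (n := n) hd hdp
    (show 2048 * d * p ^ 2 * γ ≤ 1 by linarith)]

lemma sum_annihilatorCount_ne_zero_le_of_cube_le {p d n : ℕ} [Fact p.Prime] (hd : 3 ≤ d)
    (hdp : d < p) (hn : 3 ≤ n) (h : 4 * gapConst d * (p * Real.log n) ^ 3 ≤ n) :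
    ∑ v : Fin n → ZMod p with v ≠ 0, (annihilatorCount d v : ℝ)
      ≤ (Real.exp 3 + 3) * (n * d)! := by
  have : NeZero n := ⟨by lia⟩
  have hn3 : (3 : ℝ) ≤ n := by exact_mod_cast hn
  have hd3 : (3 : ℝ) ≤ d := by exact_mod_cast hd
  have hL : 1 ≤ Real.log n := by
    rw [Real.le_log_iff_exp_le (by positivity)]
    linarith [Real.exp_one_lt_d9]
  set L := Real.log n
  have hp1 : (1 : ℝ) ≤ p := by exact_mod_cast (Fact.out : p.Prime).one_le
  have hB : 6000000 + 2048 * (d : ℝ) ≤ gapConst d := le_add_of_nonneg_right (by positivity)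
  have hpL : 1 ≤ (p * L) ^ 3 := one_le_pow₀ (one_le_mul_of_one_le_of_one_le hp1 hL)
  refine sum_annihilatorCount_ne_zero_le hd hdp (γ := 4 * p * L / n) (by positivity) ?_ ?_ ?_
  · calc gapConst d * (p ^ 2 * (4 * p * L / n)) = 4 * gapConst d * (p ^ 3 * L) / n := by ring
      _ ≤ 4 * gapConst d * (p * L) ^ 3 / n := by
        rw [mul_pow]
        gcongr
        · linarith
        · exact le_self_pow₀ hL (by norm_num)
      _ ≤ 1 := div_le_one_of_le₀ h (by positivity)
  · calc 333396 * (4 * p * L / n) ^ 3 * n ^ 2 = 21337344 * (p * L) ^ 3 / n := by field_simp; ring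
      _ ≤ 1 := div_le_one_of_le₀ (by nlinarith) (by positivity)
  · have hdn : 12 * (d : ℝ) ≤ n := by nlinarith
    have hexp : Real.exp (4 * p * L / n * n) = ((n : ℝ) ^ 4) ^ p := by
      rw [div_mul_cancel₀ _ (by positivity), ← pow_mul, ← Real.exp_log (show (0 : ℝ) < n by
        positivity), ← Real.exp_nat_mul]
      simp [L]
    rw [hexp]
    gcongr
    calc ((n : ℝ) + 1) * (3 * (n * d + 1)) ≤ (2 * n) * (3 * (2 * (n * d))) := by
          gcongr <;> nlinarith
      _ = 12 * d * n ^ 2 := by ring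
      _ ≤ n ^ 2 * n ^ 2 := by gcongr; nlinarith
      _ = n ^ 4 := by ring

lemma sub_one_mul_card_det_eq_zero_le {p d n : ℕ} [Fact p.Prime] (hd : 3 ≤ d) (hdp : d < p)
    (hn : 3 ≤ n) (h : 4 * gapConst d * (p * Real.log n) ^ 3 ≤ n) :
    ((p : ℝ) - 1) * #{P : Equiv.Perm (Fin n × Fin d) | (adjMat n d P).det = 0}
      ≤ 30 * (n * d)! := by
  have hexp : Real.exp 3 ≤ 27 := by
    rw [← mul_one (3 : ℝ), ← Nat.cast_ofNat (n := 3), Real.exp_nat_mul]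
    calc Real.exp 1 ^ 3 ≤ 3 ^ 3 := by gcongr; linarith [Real.exp_one_lt_d9]
      _ = 27 := by norm_num
  have hcount := mul_card_det_eq_zero_le (ZMod p) n d
  rw [ZMod.card] at hcount
  rw [← Nat.cast_one, ← Nat.cast_sub (Fact.out : p.Prime).one_le]
  calc ((p - 1 : ℕ) : ℝ) * #{P : Equiv.Perm (Fin n × Fin d) | (adjMat n d P).det = 0}
      ≤ ∑ v : Fin n → ZMod p with v ≠ 0, (annihilatorCount d v : ℝ) := by exact_mod_cast hcount
    _ ≤ (Real.exp 3 + 3) * (n * d)! := sum_annihilatorCount_ne_zero_le_of_cube_le hd hdp hn h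
    _ ≤ 30 * (n * d)! := by gcongr; linarith

lemma eventually_exists_prime {β : ℝ} (hβ0 : 0 < β) (hβ : β < 1 / 3) {C : ℝ} (hC : 0 < C)
    (K : ℕ) : ∀ᶠ n : ℕ in Filter.atTop, ∃ p : ℕ, p.Prime ∧ K < p ∧ 30 * (n : ℝ) ^ β ≤ p - 1 ∧
      C * (p * Real.log n) ^ 3 ≤ n := by
  have hlog := ((isLittleO_log_rpow_rpow_atTop (s := 1 - 3 * β) 3 (by linarith)).comp_tendsto
    tendsto_natCast_atTop_atTop).bound (c := 1 / (C * 62 ^ 3)) (by positivity)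
  have hK := ((tendsto_rpow_atTop hβ0).comp tendsto_natCast_atTop_atTop).eventually_ge_atTop (K : ℝ)
  filter_upwards [hlog, hK, Filter.eventually_ge_atTop 1] with n hlog hK hn
  simp only [Function.comp] at hlog hK
  have hn1 : (1 : ℝ) ≤ n := by exact_mod_cast hn
  have hx : 1 ≤ (n : ℝ) ^ β := Real.one_le_rpow hn1 hβ0.le
  have hlog3 : Real.log n ^ 3 ≤ 1 / (C * 62 ^ 3) * (n : ℝ) ^ (1 - 3 * β) := by
    rwa [← Nat.cast_ofNat (n := 3), Real.rpow_natCast, Real.norm_of_nonneg (by positivity),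
      Real.norm_of_nonneg (by positivity)] at hlog
  obtain ⟨p, hp, hlt, hle⟩ := Nat.exists_prime_lt_and_le_two_mul ⌈30 * (n : ℝ) ^ β⌉₊
    (Nat.ceil_pos.2 (by positivity)).ne'
  have hlt' : (⌈30 * (n : ℝ) ^ β⌉₊ : ℝ) + 1 ≤ p := by exact_mod_cast hlt
  have hle' : (p : ℝ) ≤ 2 * ⌈30 * (n : ℝ) ^ β⌉₊ := by exact_mod_cast hle
  have hge := Nat.le_ceil (30 * (n : ℝ) ^ β)
  have hceil := Nat.ceil_lt_add_one (by positivity : 0 ≤ 30 * (n : ℝ) ^ β)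
  refine ⟨p, hp, ?_, by linarith, ?_⟩
  · rify
    linarith
  calc C * (p * Real.log n) ^ 3 = C * (p ^ 3 * Real.log n ^ 3) := by rw [mul_pow]
    _ ≤ C * ((62 * (n : ℝ) ^ β) ^ 3 * (1 / (C * 62 ^ 3) * (n : ℝ) ^ (1 - 3 * β))) := by
      gcongr
      linarith
    _ = ((n : ℝ) ^ β) ^ 3 * (n : ℝ) ^ (1 - 3 * β) := by field_simp
    _ = n := by
      rw [← Real.rpow_mul_natCast (by positivity), ← Real.rpow_add (by positivity)]
      norm_num [mul_comm β]

end ConfigModel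

open ConfigModel in
theorem directed_singular_real_general (d : ℕ) (hd : 3 ≤ d) {β : ℝ} (hβ : β < 1 / 3) :
    ∃ N : ℕ, ∀ n : ℕ, N ≤ n →
      (#{P : Equiv.Perm (Fin n × Fin d) | (adjMat n d P).det = 0} : ℝ)
        ≤ (n : ℝ) ^ (-β) * ((n * d).factorial : ℝ) := by
  have hα : max β (1 / 4) < 1 / 3 := max_lt hβ (by norm_num)
  have hC : 0 < 4 * gapConst d := by unfold gapConst; positivity
  obtain ⟨N, hN⟩ := Filter.eventually_atTop.1
    ((eventually_exists_prime (by positivity) hα hC d).and (Filter.eventually_ge_atTop 3))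
  refine ⟨N, fun n hn => ?_⟩
  obtain ⟨⟨p, hp, hdp, hpn, hcube⟩, hn3⟩ := hN n hn
  have : Fact p.Prime := ⟨hp⟩
  have hcount := sub_one_mul_card_det_eq_zero_le hd hdp hn3 hcube
  have hn0 : (0 : ℝ) < n := by positivity
  set c := #{P : Equiv.Perm (Fin n × Fin d) | (adjMat n d P).det = 0}
  have hbound : c ≤ (n : ℝ) ^ (-max β (1 / 4)) * (n * d).factorial := by
    rw [Real.rpow_neg hn0.le, inv_mul_eq_div, le_div_iff₀ (by positivity)]
    linarith [mul_le_mul_of_nonneg_right hpn (Nat.cast_nonneg (α := ℝ) c)]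
  refine hbound.trans ?_
  gcongr
  · exact_mod_cast (by lia : 1 ≤ n)
  · exact le_max_left _ _

/-- For fixed `d ≥ 3` and `𝔡 = min {1/4, (d-2)/(2d)}`, eventually in `n`, the number of
permutations `P` of `[n]×[d]` with `det A(P) = 0` (over `ℤ`, equivalently over `ℝ`) is
at most `n^{-𝔡} (nd)!`. -/
theorem directed_singular_real (d : ℕ) (hd : 3 ≤ d) :
    ∃ N : ℕ, ∀ n : ℕ, N ≤ n →
      ((Finset.univ.filter (fun P : Equiv.Perm (Fin n × Fin d) =>
          (adjMat n d P).det = 0)).card : ℝ)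
        ≤ (n : ℝ) ^ (-(min (1/4 : ℝ) (((d : ℝ) - 2) / (2 * (d : ℝ))))) *
            ((n * d).factorial : ℝ) :=
  directed_singular_real_general d hd ((min_le_left _ _).trans_lt (by norm_num))
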